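/- The HCPP instance I_φ=(G,ω,𝒫,≺) produced by the construction from a 3-CNF formula φ admits a tight tour if and only if φ is satisfiable. -/

import Mathlib

namespace HCPPFormal

variable {V : Type} [DecidableEq V]

/-- The degree of a vertex in a multigraph given as a multiset of edges
(loops count twice, multiplicities are counted). -/
def mDeg (M : Multiset (Sym2 V)) (v : V) : ℕ :=
  (M.map fun e => if e = Sym2.diag v then 2 else if v ∈ e then 1 else 0).sum

/-- The vertex set of the multigraph induced by a multiset of edges. -/
def mVerts (M : Multiset (Sym2 V)) : Set V := {v | ∃ e ∈ M, v ∈ e}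

/-- Adjacency in the multigraph induced by a multiset of edges. -/
def mAdj (M : Multiset (Sym2 V)) (a b : V) : Prop := s(a, b) ∈ M

/-- The multigraph induced by a multiset of edges is connected. -/
def mConnected (M : Multiset (Sym2 V)) : Prop :=
  ∀ u ∈ mVerts M, ∀ v ∈ mVerts M, Relation.ReflTransGen (mAdj M) u v

/-- The list of edges traversed by a walk, given as its list of vertices. -/
def walkEdgeList (w : List V) : List (Sym2 V) :=
  (w.zip w.tail).map fun p => s(p.1, p.2)

/-- The multiset of edges traversed by a walk (with multiplicities). -/
def walkEdges (w : List V) : Multiset (Sym2 V) :=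
  (walkEdgeList w : Multiset (Sym2 V))

/-- The weight of a multiset of edges. -/
def mWeight (ω : Sym2 V → ℕ) (M : Multiset (Sym2 V)) : ℕ := (M.map ω).sum

/-- The weight of a walk. -/
def wWeight (ω : Sym2 V → ℕ) (w : List V) : ℕ := mWeight ω (walkEdges w)

/-- A multiset `M` of edges is a perfect matching on the vertex set `U`:
it is a set of pairwise vertex-disjoint non-loop edges
whose endpoints are exactly the vertices of `U`. -/
def IsPerfectMatchingOn (M : Multiset (Sym2 V)) (U : Set V) : Prop :=
  M.Nodup ∧ (∀ e ∈ M, ¬ e.IsDiag) ∧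
  (∀ e ∈ M, ∀ e' ∈ M, e ≠ e' → ∀ v : V, v ∈ e → v ∉ e') ∧
  mVerts M = U



/-- Vertices of the graph constructed from a 3-CNF formula:
`t i l`, `z i l`, `f i l` are the vertices `t_i^ℓ`, `z_i^ℓ`, `f_i^ℓ`;
`cs` is the vertex `c*`; `c1 j`, `c2 j` are `c_j¹`, `c_j²`;
`a i j`, `b i j` are the auxiliary vertices `a_{ij}`, `b_{ij}`. -/
inductive V3 : Type where
  | t (i l : ℕ) : V3
  | z (i l : ℕ) : V3
  | f (i l : ℕ) : V3
  | cs : V3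
  | c1 (j : ℕ) : V3
  | c2 (j : ℕ) : V3
  | a (i j : ℕ) : V3
  | b (i j : ℕ) : V3
deriving DecidableEq

/-- A 3-CNF formula with variables `0, …, n-1` and clauses `0, …, m-1`;
the pair `(i, true)` represents the literal `x_i` and `(i, false)` represents `¬x_i`.
Each clause has at most three literals, and no clause contains
both a variable and its negation. -/
structure CNF3 : Type where
  n : ℕ
  m : ℕ
  clause : ℕ → Finset (ℕ × Bool)
  size_le : ∀ j < m, (clause j).card ≤ 3
  var_lt : ∀ j < m, ∀ p ∈ clause j, p.1 < n
  no_taut : ∀ j < m, ∀ i : ℕ, ¬ ((i, true) ∈ clause j ∧ (i, false) ∈ clause j)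

/-- The clauses containing the variable `x_i` (positively or negatively). -/
def occ (φ : CNF3) (i : ℕ) : Finset ℕ :=
  (Finset.range φ.m).filter fun j => (i, true) ∈ φ.clause j ∨ (i, false) ∈ φ.clause j

/-- `μ φ i` is the number of clauses containing `x_i` or `¬x_i`. -/
def μ (φ : CNF3) (i : ℕ) : ℕ := (occ φ i).card

/-- `posOf φ i j` is the (1-based) position `ℓ` such that clause `j` is
the `ℓ`-th clause containing `x_i` or `¬x_i`. -/
def posOf (φ : CNF3) (i j : ℕ) : ℕ := ((occ φ i).filter fun j' => j' ≤ j).card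

/-- The edges of the cycle `X_i`. -/
def Xedges (φ : CNF3) (i : ℕ) : Finset (Sym2 V3) :=
  ((Finset.Ico 1 (6 * μ φ i)).image fun l => s(V3.t i l, V3.t i (l + 1))) ∪
  ((Finset.Ico 1 (6 * μ φ i)).image fun l => s(V3.f i l, V3.f i (l + 1))) ∪
  {s(V3.t i (6 * μ φ i), V3.f i (6 * μ φ i)), s(V3.f i 1, V3.t i 1)}

/-- The edges of the cycle `Y_{i i'}` where `i' = (i mod n) + 1` (0-based: `(i+1) % n`). -/
def Yedges (φ : CNF3) (i : ℕ) : Finset (Sym2 V3) :=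
  {s(V3.t i (6 * μ φ i), V3.f ((i + 1) % φ.n) 1),
   s(V3.f ((i + 1) % φ.n) 1, V3.f i (6 * μ φ i)),
   s(V3.f i (6 * μ φ i), V3.t ((i + 1) % φ.n) 1),
   s(V3.t ((i + 1) % φ.n) 1, V3.t i (6 * μ φ i))}

/-- The edges of the cycle `Z_{ij}` (for a positive occurrence of `x_i` in clause `C_j`). -/
def Zedges (φ : CNF3) (i j : ℕ) : Finset (Sym2 V3) :=
  {s(V3.t i (6 * posOf φ i j - 3), V3.c1 j),
   s(V3.c1 j, V3.a i j),
   s(V3.a i j, V3.c2 j),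
   s(V3.c2 j, V3.t i (6 * posOf φ i j - 2)),
   s(V3.t i (6 * posOf φ i j - 2), V3.b i j),
   s(V3.b i j, V3.t i (6 * posOf φ i j - 3))}

/-- The edges of the cycle `Z̄_{ij}` (for a negative occurrence of `¬x_i` in clause `C_j`). -/
def Zbedges (φ : CNF3) (i j : ℕ) : Finset (Sym2 V3) :=
  {s(V3.f i (6 * posOf φ i j - 3), V3.c1 j),
   s(V3.c1 j, V3.a i j),
   s(V3.a i j, V3.c2 j),
   s(V3.c2 j, V3.f i (6 * posOf φ i j - 2)),
   s(V3.f i (6 * posOf φ i j - 2), V3.b i j),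
   s(V3.b i j, V3.f i (6 * posOf φ i j - 3))}

/-- The edge class `E_0`: all edges of all cycles `X_i`, `Y_{ii'}`, `Z_{ij}`, `Z̄_{ij}`. -/
def E0 (φ : CNF3) : Finset (Sym2 V3) :=
  ((Finset.range φ.n).biUnion fun i => Xedges φ i) ∪
  ((Finset.range φ.n).biUnion fun i => Yedges φ i) ∪
  ((Finset.range φ.m).biUnion fun j =>
    (φ.clause j).biUnion fun p => if p.2 then Zedges φ p.1 j else Zbedges φ p.1 j)

/-- The edge class `E_i^ℓ`: the edges of the path `P_i^ℓ = (t_i^ℓ, z_i^ℓ, f_i^ℓ)`. -/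
def Epl (φ : CNF3) (i l : ℕ) : Finset (Sym2 V3) :=
  {s(V3.t i l, V3.z i l), s(V3.z i l, V3.f i l)}

/-- The edge class `E*`: all edges incident to `c*`,
i.e. the edges of the paths `(c_j¹, c*, c_j²)`. -/
def Estar (φ : CNF3) : Finset (Sym2 V3) :=
  (Finset.range φ.m).biUnion fun j => {s(V3.c1 j, V3.cs), s(V3.cs, V3.c2 j)}

/-- All edges of the constructed graph `G`. -/
def Eall (φ : CNF3) : Finset (Sym2 V3) :=
  E0 φ ∪ Estar φ ∪
  ((Finset.range φ.n).biUnion fun i => (Finset.Icc 1 (6 * μ φ i)).biUnion fun l => Epl φ i l)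

/-- The vertex set `V_FT` of all vertices `t_i^ℓ` and `f_i^ℓ`. -/
def VFT (φ : CNF3) : Set V3 :=
  {v | ∃ i < φ.n, ∃ l : ℕ, 1 ≤ l ∧ l ≤ 6 * μ φ i ∧ (v = V3.t i l ∨ v = V3.f i l)}

/-- The vertex set `V_C` of all vertices `c_j¹` and `c_j²`. -/
def VC (φ : CNF3) : Set V3 :=
  {v | ∃ j < φ.m, v = V3.c1 j ∨ v = V3.c2 j}


/-- Indices for the edge classes of the constructed instance:
`e0` for `E_0`, `pl i l` for `E_i^ℓ`, `star` for `E*`. -/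
inductive CI : Type where
  | e0 : CI
  | pl (i l : ℕ) : CI
  | star : CI
deriving DecidableEq

/-- The edge class with a given index. -/
def classEdges (φ : CNF3) : CI → Finset (Sym2 V3)
  | .e0 => E0 φ
  | .pl i l => Epl φ i l
  | .star => Estar φ

/-- The class indices actually occurring in the constructed instance. -/
def validCI (φ : CNF3) : CI → Prop
  | .e0 => True
  | .pl i l => i < φ.n ∧ 1 ≤ l ∧ l ≤ 6 * μ φ i
  | .star => True

/-- The (strict) precedence order on the classes: `E_0` precedes every `E_i^ℓ`,
the classes `E_i^ℓ` are ordered lexicographically, and `E*` is incomparable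
to all other classes. -/
def prec : CI → CI → Prop
  | .e0, .pl _ _ => True
  | .pl i l, .pl i' l' => i < i' ∨ (i = i' ∧ l < l')
  | _, _ => False

/-- A list of traversed edges respects the precedence constraints: whenever the
edge traversed at step `q` belongs to a class `A`, every edge of every class
`B ≺ A` has already been traversed at some earlier step `p < q`. -/
def PrecRespecting (φ : CNF3) (L : List (Sym2 V3)) : Prop :=
  ∀ (q : ℕ) (hq : q < L.length) (A : CI), validCI φ A → L.get ⟨q, hq⟩ ∈ classEdges φ A →
    ∀ B : CI, validCI φ B → prec B A → ∀ e ∈ classEdges φ B,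
      ∃ (p : ℕ) (hp : p < L.length), p < q ∧ L.get ⟨p, hp⟩ = e

/-- A feasible solution for the constructed HCPP instance: a closed walk in `G`
traversing every edge at least once and respecting the precedence constraints. -/
def FeasibleTour (φ : CNF3) (T : List V3) : Prop :=
  T ≠ [] ∧ T.Chain' (fun a b => s(a, b) ∈ Eall φ) ∧ T.head? = T.getLast? ∧
  (∀ e ∈ Eall φ, e ∈ walkEdges T) ∧ PrecRespecting φ (walkEdgeList T)

/-- The number `b` of imbalanced vertices of the constructed graph `G`. -/
noncomputable def imb (φ : CNF3) : ℕ := Nat.card {v : V3 // ¬ Even (mDeg (Eall φ).val v)}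

/-- A tight tour: a feasible solution of weight at most `|E| + b/2`
(all edges have weight one, so the weight is the number of edge traversals). -/
def IsTightTour (φ : CNF3) (T : List V3) : Prop :=
  FeasibleTour φ T ∧
  ((Multiset.card (walkEdges T) : ℚ) ≤ (Eall φ).card + (imb φ : ℚ) / 2)

/-- A 3-CNF formula is satisfiable: some truth assignment to the variables
satisfies every clause. -/
def Satisfiable (φ : CNF3) : Prop :=
  ∃ σ : ℕ → Bool, ∀ j < φ.m, ∃ p ∈ φ.clause j, σ p.1 = p.2

/-!
The imbalanced vertices of `I_φ` are exactly `t_i^l`, `f_i^l`, `c_j¹` and `c_j²`. A closed walk has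
even degree everywhere, so its traversals beyond the first of each edge meet every imbalanced
vertex; a tight tour has at most `b / 2` of them, so they perfectly match the imbalanced vertices.

From a tight tour to an assignment: between its crossings of `P_i^l` and `P_i^(l+1)` all of `E_0`
and of the earlier paths is used up and the later paths are still forbidden, so the tour moves along
edges at `c*` and matching edges. Hence the exit from `P_i^l` is matched to the entry of
`P_i^(l+1)`, or both are matched to contacts `c_j¹`, `c_j²` of one clause. Either way they lie on
the same side, so the side from which `P_i^l` is entered alternates with `l`. A vertex on `P_i^l`
matched to `c_j¹` has `l ≡ 3` modulo 6 and cannot be an entry, since the exit from `P_i^(l-1)` has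
no edge to a contact. So the literals given by the exits of the paths at odd `l` satisfy every
clause.

Conversely, given a satisfying assignment, `E_0` is a connected union of edge-disjoint cycles and
has an Eulerian circuit. After it the tour crosses the paths `P_i^l` in order, on alternating sides
and exiting at odd `l` on the side of the true literal. It moves from an exit to the next entry
along an edge of `E_0`, except that for each clause `j` one such edge, next to a true literal of the
clause, is replaced by a detour through `c_j¹`, `c*`, `c_j²`.
-/

section Walks

variable {α : Type*}

/-- A walk from one vertex to another, recorded by the list of edges it traverses. -/
inductive IsWalk : α → List (Sym2 α) → α → Prop
  | nil (u : α) : IsWalk u [] u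
  | cons (u : α) {v w : α} {L : List (Sym2 α)} : IsWalk v L w → IsWalk u (s(u, v) :: L) w

namespace IsWalk

variable {u v w : α} {e : Sym2 α} {L L' : List (Sym2 α)}

theorem single (u v : α) : IsWalk u [s(u, v)] v := cons u (nil v)

theorem append (h : IsWalk u L v) (h' : IsWalk v L' w) : IsWalk u (L ++ L') w := by
  induction h with
  | nil u => exact h'
  | cons u _ ih => exact cons u (ih h')

theorem reverse (h : IsWalk u L v) : IsWalk v L.reverse u := by
  induction h with
  | nil u => exact nil u
  | @cons u x _ _ _ ih =>
    rw [List.reverse_cons, Sym2.eq_swap]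
    exact ih.append (single x u)

theorem nil_iff : IsWalk u [] v ↔ u = v :=
  ⟨fun h => by cases h; rfl, fun h => h ▸ nil u⟩

theorem cons_iff : IsWalk u (e :: L) w ↔ ∃ v, e = s(u, v) ∧ IsWalk v L w := by
  constructor
  · rintro (_ | ⟨_, h⟩)
    exact ⟨_, rfl, h⟩
  · rintro ⟨v, rfl, h⟩
    exact cons u h

theorem append_iff : IsWalk u (L ++ L') w ↔ ∃ v, IsWalk u L v ∧ IsWalk v L' w := by
  induction L generalizing u with
  | nil => simp [nil_iff]
  | cons e L ih =>
    simp only [List.cons_append, cons_iff, ih]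
    grind

theorem concat_iff : IsWalk u (L ++ [e]) w ↔ ∃ v, e = s(v, w) ∧ IsWalk u L v := by
  simp only [append_iff, cons_iff, nil_iff]
  grind

theorem exists_append_of_mem (h : IsWalk u L w) (he : e ∈ L) (hv : v ∈ e) :
    ∃ A B, L = A ++ B ∧ IsWalk u A v ∧ IsWalk v B w := by
  obtain ⟨A, B, rfl⟩ := List.append_of_mem he
  obtain ⟨x, hA, hB⟩ := append_iff.1 h
  obtain ⟨y, rfl, hB'⟩ := cons_iff.1 hB
  rcases Sym2.mem_iff.1 hv with rfl | rfl
  · exact ⟨A, _, rfl, hA, hB⟩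
  · exact ⟨A ++ [s(x, v)], B, by simp, hA.append (single x v), hB'⟩

theorem flatMap_range {f : ℕ → α} {g : ℕ → List (Sym2 α)} {n : ℕ}
    (h : ∀ k < n, IsWalk (f k) (g k) (f (k + 1))) :
    IsWalk (f 0) ((List.range n).flatMap g) (f n) := by
  induction n with
  | zero => exact nil _
  | succ n ih =>
    rw [List.range_succ, List.flatMap_append]
    simpa using (ih fun k hk => h k (by omega)).append (h n (by omega))

end IsWalk

/-- The multiset `S` of edges can be traversed by a closed walk from `u` that uses every edge
exactly as often as it occurs in `S`. -/
def HasCircuit (u : α) (S : Multiset (Sym2 α)) : Prop :=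
  ∃ L, IsWalk u L u ∧ (L : Multiset (Sym2 α)) = S

namespace HasCircuit

variable {u v : α} {e : Sym2 α}

theorem zero (u : α) : HasCircuit u 0 := ⟨[], .nil u, rfl⟩

theorem rotate {S : Multiset (Sym2 α)} (h : HasCircuit u S) (he : e ∈ S) (hv : v ∈ e) :
    HasCircuit v S := by
  obtain ⟨L, hL, rfl⟩ := h
  obtain ⟨A, B, rfl, hA, hB⟩ := hL.exists_append_of_mem he hv
  exact ⟨B ++ A, hB.append hA, Multiset.coe_eq_coe.2 List.perm_append_comm⟩

theorem add {S S' : Multiset (Sym2 α)} (h : HasCircuit u S) (h' : HasCircuit v S')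
    (he : e ∈ S) (hv : v ∈ e) : HasCircuit u (S + S') := by
  obtain ⟨L, hL, rfl⟩ := h
  obtain ⟨L', hL', rfl⟩ := h'
  obtain ⟨A, B, rfl, hA, hB⟩ := hL.exists_append_of_mem he hv
  refine ⟨A ++ (L' ++ B), hA.append (hL'.append hB), ?_⟩
  simp only [← Multiset.coe_add]
  abel

theorem of_list {L : List (Sym2 α)} {S : Finset (Sym2 α)} (h : IsWalk u L u)
    (hS : ∀ e ∈ S, e ∈ L) (hL : L.length ≤ S.card) : HasCircuit u S.val := by
  have hle : S.val ≤ L := (Multiset.le_iff_subset S.nodup).2 hS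
  exact ⟨L, h, (Multiset.eq_of_le_of_card_le hle (by simpa using hL)).symm⟩

variable [DecidableEq α]

theorem union {S S' : Finset (Sym2 α)} (h : HasCircuit u S.val) (h' : HasCircuit v S'.val)
    (hd : Disjoint S S') (he : e ∈ S) (hv : v ∈ e) : HasCircuit u (S ∪ S').val := by
  rw [← Finset.disjUnion_eq_union S S' hd]
  exact h.add h' he hv

theorem union_biUnion {ι : Type*} {S : Finset (Sym2 α)} {I : Finset ι} {F : ι → Finset (Sym2 α)}
    (h : HasCircuit u S.val)
    (hF : ∀ i ∈ I, ∃ e ∈ S, ∃ v ∈ e, HasCircuit v (F i).val)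
    (hS : ∀ i ∈ I, Disjoint S (F i)) (hd : (I : Set ι).PairwiseDisjoint F) :
    HasCircuit u (S ∪ I.biUnion F).val := by
  classical
  induction I using Finset.induction_on with
  | empty => simpa using h
  | insert i I hi ih =>
    obtain ⟨e, he, v, hv, hc⟩ := hF i (I.mem_insert_self i)
    rw [Finset.biUnion_insert, Finset.union_comm (F i), ← Finset.union_assoc]
    refine (ih (fun k hk => hF k (Finset.mem_insert_of_mem hk))
      (fun k hk => hS k (Finset.mem_insert_of_mem hk))
      (hd.subset (by simp))).union hc ?_ (Finset.mem_union_left _ he) hv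
    rw [Finset.disjoint_union_left, Finset.disjoint_biUnion_left]
    refine ⟨hS i (I.mem_insert_self i), fun k hk => ?_⟩
    exact hd (by simp [hk]) (by simp) (by rintro rfl; exact hi hk)

end HasCircuit

end Walks

section WalkEdgeList

variable {α : Type}

theorem isWalk_walkEdgeList (u : α) (w : List α) :
    IsWalk u (walkEdgeList (u :: w)) ((u :: w).getLast (by simp)) := by
  induction w generalizing u with
  | nil => exact .nil u
  | cons x w ih =>
    rw [List.getLast_cons (by simp)]
    exact .cons u (ih x)

theorem IsWalk.exists_walkEdgeList {u v : α} {L : List (Sym2 α)} (h : IsWalk u L v) :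
    ∃ w, walkEdgeList (u :: w) = L ∧ (u :: w).getLast (by simp) = v := by
  induction h with
  | nil u => exact ⟨[], rfl, rfl⟩
  | @cons u x v L _ ih =>
    obtain ⟨w, rfl, hw⟩ := ih
    exact ⟨x :: w, rfl, by rw [List.getLast_cons (by simp), hw]⟩

theorem isChain_mem_iff (S : Finset (Sym2 α)) (u : α) (w : List α) :
    (u :: w).IsChain (fun a b => s(a, b) ∈ S) ↔ ∀ e ∈ walkEdgeList (u :: w), e ∈ S := by
  induction w generalizing u with
  | nil => simp [walkEdgeList]
  | cons x w ih =>
    rw [List.isChain_cons_cons, ih,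
      show walkEdgeList (u :: x :: w) = s(u, x) :: walkEdgeList (x :: w) from rfl,
      List.forall_mem_cons]

end WalkEdgeList

section Degrees

variable {α : Type} [DecidableEq α]

theorem mDeg_add (M N : Multiset (Sym2 α)) (v : α) : mDeg (M + N) v = mDeg M v + mDeg N v := by
  simp [mDeg]

theorem mDeg_cons (e : Sym2 α) (M : Multiset (Sym2 α)) (v : α) :
    mDeg (e ::ₘ M) v = mDeg {e} v + mDeg M v :=
  mDeg_add {e} M v

theorem mDeg_finset_val (S : Finset (Sym2 α)) (v : α) :
    mDeg S.val v = ∑ e ∈ S, mDeg {e} v := by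
  simp only [mDeg, Multiset.map_singleton, Multiset.sum_singleton]
  rfl

theorem mDeg_mk (a b v : α) :
    mDeg {s(a, b)} v = (if v = a then 1 else 0) + (if v = b then 1 else 0) := by
  by_cases ha : v = a <;> by_cases hb : v = b <;> simp [mDeg, Sym2.diag, ha, hb] <;> grind

theorem mDeg_pos_iff {M : Multiset (Sym2 α)} {v : α} : 0 < mDeg M v ↔ v ∈ mVerts M := by
  induction M using Multiset.induction_on with
  | empty => simp [mDeg, mVerts]
  | cons e M ih =>
    induction e with | _ a b
    have hM : v ∈ mVerts (s(a, b) ::ₘ M) ↔ (v = a ∨ v = b) ∨ v ∈ mVerts M := by simp [mVerts]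
    rw [hM, ← ih, mDeg_cons, mDeg_mk]
    split_ifs <;> simp [*]

theorem IsWalk.even_mDeg_add {u w : α} {L : List (Sym2 α)} (h : IsWalk u L w) (x : α) :
    Even (mDeg L x + (if x = u then 1 else 0) + (if x = w then 1 else 0)) := by
  induction h with
  | nil u => simp [mDeg]
  | @cons u v w L _ ih =>
    rw [← Multiset.cons_coe, mDeg_cons, mDeg_mk]
    grind

theorem HasCircuit.even_mDeg {u : α} {S : Multiset (Sym2 α)} (h : HasCircuit u S) (x : α) :
    Even (mDeg S x) := by
  obtain ⟨L, hL, rfl⟩ := h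
  have := hL.even_mDeg_add x
  grind

theorem mDeg_mono {M N : Multiset (Sym2 α)} (h : M ≤ N) (v : α) : mDeg M v ≤ mDeg N v := by
  obtain ⟨K, rfl⟩ := Multiset.le_iff_exists_add.1 h
  rw [mDeg_add]
  exact Nat.le_add_right _ _

theorem two_le_mDeg_pair {e e' : Sym2 α} {v : α} (he : v ∈ e) (he' : v ∈ e') :
    2 ≤ mDeg {e, e'} v := by
  have hpos (e : Sym2 α) (h : v ∈ e) : 0 < mDeg {e} v := mDeg_pos_iff.2 (by simpa [mVerts] using h)
  rw [Multiset.insert_eq_cons, mDeg_cons]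
  exact Nat.add_le_add (hpos e he) (hpos e' he')

theorem sum_mDeg_mk (U : Finset α) (a b : α) :
    ∑ v ∈ U, mDeg {s(a, b)} v = (if a ∈ U then 1 else 0) + (if b ∈ U then 1 else 0) := by
  simp only [mDeg_mk, Finset.sum_add_distrib, Finset.sum_ite_eq']

theorem sum_mDeg_le (U : Finset α) (M : Multiset (Sym2 α)) :
    ∑ v ∈ U, mDeg M v ≤ 2 * Multiset.card M := by
  induction M using Multiset.induction_on with
  | empty => simp [mDeg]
  | cons e M ih =>
    induction e with | _ a b
    simp only [mDeg_cons, Finset.sum_add_distrib, sum_mDeg_mk, Multiset.card_cons]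
    split_ifs <;> omega

end Degrees

section PerfectMatching

variable {α : Type}

theorem isPerfectMatchingOn_of_card_le [DecidableEq α] {M : Multiset (Sym2 α)} {U : Finset α}
    (hU : ∀ v ∈ U, 0 < mDeg M v) (hM : 2 * Multiset.card M ≤ U.card) :
    IsPerfectMatchingOn M U := by
  have hsum : ∑ v ∈ U, 1 = ∑ v ∈ U, mDeg M v :=
    (Finset.sum_le_sum hU).antisymm ((sum_mDeg_le U M).trans (by simpa using hM))
  have hone : ∀ v ∈ U, 1 = mDeg M v := (Finset.sum_eq_sum_iff_of_le hU).1 hsum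
  have hends : ∀ e ∈ M, ∀ v ∈ e, v ∈ U := by
    intro e he
    obtain ⟨N, rfl⟩ := Multiset.exists_cons_of_mem he
    induction e with | _ a b
    have hN := sum_mDeg_le U N
    simp only [mDeg_cons, Finset.sum_add_distrib, sum_mDeg_mk, Multiset.card_cons,
      Finset.sum_const, smul_eq_mul, mul_one] at hsum hM
    have : a ∈ U ∧ b ∈ U := by
      by_contra h
      split_ifs at hsum <;> first | omega | tauto
    simpa using this
  have hpair : ∀ e e' : Sym2 α, {e, e'} ≤ M → ∀ v ∈ e, v ∉ e' := by
    intro e e' hle v he he'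
    have := hone v (hends e (Multiset.mem_of_le hle (by simp)) v he)
    exact absurd ((two_le_mDeg_pair he he').trans (mDeg_mono hle v)) (by omega)
  have hnodup : M.Nodup := Multiset.nodup_iff_le.2 fun e hle =>
    hpair e e hle e.out.1 (Sym2.out_fst_mem e) (Sym2.out_fst_mem e)
  refine ⟨hnodup, ?_, ?_, ?_⟩
  · rintro e he hdiag
    induction e with | _ a b
    obtain rfl : a = b := hdiag
    have := mDeg_mono (Multiset.singleton_le.2 he) a
    rw [mDeg_mk, ← hone a (hends _ he a (by simp))] at this
    simp at this
  · exact fun e he e' he' hne => hpair e e' <| (Multiset.le_iff_subset (by simpa using hne)).2 <| by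
      simp [Multiset.insert_eq_cons, Multiset.cons_subset, he, he']
  · ext v
    exact ⟨fun ⟨e, he, hv⟩ => hends e he v hv, fun hv => mDeg_pos_iff.1 (hU v hv)⟩

namespace IsPerfectMatchingOn

variable {M : Multiset (Sym2 α)} {U : Set α} {u v w : α}

theorem mem_of_mk_mem (h : IsPerfectMatchingOn M U) (he : s(v, w) ∈ M) : v ∈ U :=
  h.2.2.2 ▸ ⟨_, he, Sym2.mem_mk_left v w⟩

theorem exists_partner (h : IsPerfectMatchingOn M U) (hv : v ∈ U) : ∃ w, s(v, w) ∈ M := by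
  obtain ⟨e, he, w, rfl⟩ : v ∈ mVerts M := h.2.2.2 ▸ hv
  exact ⟨w, he⟩

theorem partner_unique (h : IsPerfectMatchingOn M U) (hu : s(v, u) ∈ M) (hw : s(v, w) ∈ M) :
    u = w := by
  by_contra hne
  exact h.2.2.1 _ hu _ hw (mt Sym2.congr_right.1 hne) v (Sym2.mem_mk_left v u)
    (Sym2.mem_mk_left v w)

end IsPerfectMatchingOn

end PerfectMatching

section TightWalks

theorem precRespecting_iff {φ : CNF3} {L : List (Sym2 V3)} :
    PrecRespecting φ L ↔ ∀ A e B, L = A ++ e :: B →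
      ∀ Q, validCI φ Q → e ∈ classEdges φ Q →
      ∀ P, validCI φ P → prec P Q → ∀ e' ∈ classEdges φ P, e' ∈ A := by
  constructor
  · rintro h A e B rfl Q hQ he P hP hPQ e' he'
    obtain ⟨p, hp, hlt, rfl⟩ := h A.length (by simp) Q hQ (by simpa using he) P hP hPQ e' he'
    simp [List.getElem_append_left hlt]
  · intro h q hq Q hQ he P hP hPQ e' he'
    have hsplit : L = L.take q ++ L[q] :: L.drop (q + 1) := by simp
    obtain ⟨p, hp, rfl⟩ := List.mem_iff_getElem.1 (h _ _ _ hsplit Q hQ he P hP hPQ e' he')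
    rw [List.length_take] at hp
    exact ⟨p, by omega, by omega, by simp⟩

/-- A tight tour described by the edges it traverses: the edge list `L` of a feasible closed walk
from `u`, with the bound on its length cleared of denominators. -/
structure IsTightWalk (φ : CNF3) (u : V3) (L : List (Sym2 V3)) : Prop where
  isWalk : IsWalk u L u
  mem_iff : ∀ e, e ∈ L ↔ e ∈ Eall φ
  prec : PrecRespecting φ L
  length_le : 2 * L.length ≤ 2 * (Eall φ).card + imb φ

theorem exists_isTightTour_iff {φ : CNF3} :
    (∃ T, IsTightTour φ T) ↔ ∃ u L, IsTightWalk φ u L := by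
  have cast_le (a b c : ℕ) : (a : ℚ) ≤ b + (c : ℚ) / 2 ↔ 2 * a ≤ 2 * b + c := by
    rw [← @Nat.cast_le ℚ]
    push_cast
    constructor <;> intro h <;> linarith
  have closed_iff (u : V3) (w : List V3) :
      (u :: w).head? = (u :: w).getLast? ↔ (u :: w).getLast (by simp) = u := by
    rw [List.getLast?_eq_getLast_of_ne_nil (by simp), List.head?_cons, Option.some_inj, eq_comm]
  constructor
  · rintro ⟨_ | ⟨u, w⟩, ⟨hne, hchain, hclosed, hcover, hprec⟩, hlen⟩
    · exact absurd rfl hne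
    · rw [closed_iff] at hclosed
      have hwalk := isWalk_walkEdgeList u w
      rw [hclosed] at hwalk
      exact ⟨u, _, hwalk, fun e => ⟨(isChain_mem_iff _ _ _).1 hchain e, hcover e⟩, hprec,
        (cast_le _ _ _).1 hlen⟩
  · rintro ⟨u, L, hL⟩
    obtain ⟨w, rfl, hw⟩ := hL.isWalk.exists_walkEdgeList
    exact ⟨u :: w, ⟨by simp, (isChain_mem_iff _ _ _).2 fun e => (hL.mem_iff e).1,
      (closed_iff u w).2 hw, fun e => (hL.mem_iff e).2, hL.prec⟩, (cast_le _ _ _).2 hL.length_le⟩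

end TightWalks

section Graph

/-- The two ends of the path `P_i^l`: `t_i^l` for `true`, `f_i^l` for `false`. -/
def V3.tf : Bool → ℕ → ℕ → V3
  | true => V3.t
  | false => V3.f

open V3

@[simp] theorem tf_inj {s s' : Bool} {i i' l l' : ℕ} :
    tf s i l = tf s' i' l' ↔ s = s' ∧ i = i' ∧ l = l' := by
  cases s <;> cases s' <;> simp [tf]

@[simp] theorem tf_ne (s : Bool) (i l : ℕ) :
    tf s i l ≠ cs ∧ (∀ j, tf s i l ≠ c1 j) ∧ (∀ j, tf s i l ≠ c2 j) ∧
      ∀ i' j, tf s i l ≠ z i' j ∧ tf s i l ≠ a i' j ∧ tf s i l ≠ b i' j := by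
  cases s <;> simp [tf]

@[simp] theorem ne_tf (s : Bool) (i l : ℕ) :
    cs ≠ tf s i l ∧ (∀ j, c1 j ≠ tf s i l) ∧ (∀ j, c2 j ≠ tf s i l) ∧
      ∀ i' j, z i' j ≠ tf s i l ∧ a i' j ≠ tf s i l ∧ b i' j ≠ tf s i l := by
  cases s <;> simp [tf]

/-- The cycle contributed by a literal occurring in clause `j`: `Z_{ij}` for `x_i` and `Z̄_{ij}` for
`¬x_i`. -/
def literalCycle (φ : CNF3) (lit : ℕ × Bool) (j : ℕ) : Finset (Sym2 V3) :=
  if lit.2 then Zedges φ lit.1 j else Zbedges φ lit.1 j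

/-- The cycles `X_i` and `Y_{ii'}` contributed by a variable. -/
def variableCycles (φ : CNF3) (i : ℕ) : Finset (Sym2 V3) :=
  Xedges φ i ∪ Yedges φ i

variable {φ : CNF3} {s : Bool} {i j l : ℕ} {e : Sym2 V3}

theorem literalCycle_eq : literalCycle φ (i, s) j =
    {s(tf s i (6 * posOf φ i j - 3), c1 j), s(c1 j, a i j), s(a i j, c2 j),
      s(c2 j, tf s i (6 * posOf φ i j - 2)), s(tf s i (6 * posOf φ i j - 2), b i j),
      s(b i j, tf s i (6 * posOf φ i j - 3))} := by
  cases s <;> rfl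

theorem E0_eq : E0 φ = (Finset.range φ.n).biUnion (variableCycles φ) ∪
    ((Finset.range φ.m).sigma φ.clause).biUnion fun o => literalCycle φ o.2 o.1 := by
  ext e
  simp only [E0, variableCycles, literalCycle, Finset.mem_union, Finset.mem_biUnion,
    Finset.mem_sigma, Sigma.exists]
  grind

theorem mem_Xedges : e ∈ Xedges φ i ↔
    (∃ s l, 1 ≤ l ∧ l < 6 * μ φ i ∧ e = s(tf s i l, tf s i (l + 1))) ∨
    e = s(tf true i (6 * μ φ i), tf false i (6 * μ φ i)) ∨ e = s(tf false i 1, tf true i 1) := by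
  simp only [Xedges, Finset.mem_union, Finset.mem_image, Finset.mem_Ico, Finset.mem_insert,
    Finset.mem_singleton, Bool.exists_bool, tf]
  grind

theorem mem_Yedges : e ∈ Yedges φ i ↔
    ∃ s s', e = s(tf s i (6 * μ φ i), tf s' ((i + 1) % φ.n) 1) := by
  simp only [Yedges, Finset.mem_insert, Finset.mem_singleton, Bool.exists_bool, tf]
  grind

theorem mem_E0 : e ∈ E0 φ ↔ (∃ i < φ.n, e ∈ variableCycles φ i) ∨
    ∃ j < φ.m, ∃ lit ∈ φ.clause j, e ∈ literalCycle φ lit j := by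
  simp only [E0_eq, Finset.mem_union, Finset.mem_biUnion, Finset.mem_sigma, Finset.mem_range,
    Sigma.exists, and_assoc, exists_and_left]

theorem mem_Estar : e ∈ Estar φ ↔ ∃ j < φ.m, e = s(c1 j, cs) ∨ e = s(cs, c2 j) := by
  simp [Estar]

theorem mem_Epl : e ∈ Epl φ i l ↔ ∃ s, e = s(tf s i l, z i l) := by
  simp only [Epl, Finset.mem_insert, Finset.mem_singleton, Bool.exists_bool, tf]
  grind

theorem mem_Eall : e ∈ Eall φ ↔ e ∈ E0 φ ∨ e ∈ Estar φ ∨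
    ∃ i l, validCI φ (.pl i l) ∧ e ∈ Epl φ i l := by
  simp only [Eall, validCI, Finset.mem_union, Finset.mem_biUnion, Finset.mem_range, Finset.mem_Icc]
  grind

theorem exists_tf_of_mem_variableCycles (h : e ∈ variableCycles φ i) :
    ∃ s l s' i' l', e = s(tf s i l, tf s' i' l') := by
  rw [variableCycles, Finset.mem_union, mem_Xedges, mem_Yedges] at h
  rcases h with (⟨s, l, _, _, rfl⟩ | rfl | rfl) | ⟨s, s', rfl⟩ <;> exact ⟨_, _, _, _, _, rfl⟩

theorem notMem_of_mem_E0 (h : e ∈ E0 φ) : cs ∉ e ∧ ∀ i l, z i l ∉ e := by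
  rcases mem_E0.1 h with ⟨i, _, h⟩ | ⟨j, _, ⟨i, s⟩, _, h⟩
  · obtain ⟨_, _, _, _, _, rfl⟩ := exists_tf_of_mem_variableCycles h
    simp
  · simp only [literalCycle_eq, Finset.mem_insert, Finset.mem_singleton] at h
    rcases h with rfl | rfl | rfl | rfl | rfl | rfl <;> simp

end Graph

section Positions

variable {φ : CNF3} {i j j' : ℕ}

theorem mem_occ {lit : ℕ × Bool} (hj : j < φ.m) (h : lit ∈ φ.clause j) : j ∈ occ φ lit.1 := by
  obtain ⟨i, s⟩ := lit
  cases s <;> simp [occ, hj, h]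

theorem posOf_pos (h : j ∈ occ φ i) : 0 < posOf φ i j :=
  Finset.card_pos.2 ⟨j, by simp [h]⟩

theorem posOf_le (φ : CNF3) (i j : ℕ) : posOf φ i j ≤ μ φ i :=
  Finset.card_le_card (Finset.filter_subset _ _)

theorem posOf_lt_posOf (h : j' ∈ occ φ i) (hlt : j < j') : posOf φ i j < posOf φ i j' := by
  refine Finset.card_lt_card (Finset.ssubset_iff_of_subset ?_ |>.2 ⟨j', by simp [h], by simp [hlt]⟩)
  exact Finset.monotone_filter_right _ fun k _ hk => hk.trans hlt.le

theorem posOf_injOn : Set.InjOn (posOf φ i) (occ φ i) :=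
  StrictMonoOn.injOn fun _ _ _ hj' hlt => posOf_lt_posOf hj' hlt

theorem sign_unique {s s' : Bool} (hj : j < φ.m) (h : (i, s) ∈ φ.clause j)
    (h' : (i, s') ∈ φ.clause j) : s = s' := by
  have := φ.no_taut j hj i
  cases s <;> cases s' <;> simp_all

end Positions

section Eulerian

open V3

variable {φ : CNF3} {s : Bool} {i i' j : ℕ}

theorem disjoint_Xedges_Yedges : Disjoint (Xedges φ i) (Yedges φ i') := by
  simp only [Finset.disjoint_left, mem_Xedges, mem_Yedges]
  rintro e (⟨s, l, _, _, rfl⟩ | rfl | rfl) <;>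
    simp only [Sym2.eq_iff, tf_inj, not_exists] <;> grind

theorem disjoint_variableCycles (h : i ≠ i') :
    Disjoint (variableCycles φ i) (variableCycles φ i') := by
  have hX : Disjoint (Xedges φ i) (Xedges φ i') := by
    simp only [Finset.disjoint_left, mem_Xedges]
    rintro e (⟨s, l, _, _, rfl⟩ | rfl | rfl) <;>
      simp only [Sym2.eq_iff, tf_inj] <;> grind
  have hY : Disjoint (Yedges φ i) (Yedges φ i') := by
    simp only [Finset.disjoint_left, mem_Yedges]
    rintro e ⟨s, s', rfl⟩
    simp only [Sym2.eq_iff, tf_inj]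
    grind
  simp only [variableCycles, Finset.disjoint_union_left, Finset.disjoint_union_right]
  exact ⟨⟨hX, disjoint_Xedges_Yedges.symm⟩, disjoint_Xedges_Yedges, hY⟩

theorem disjoint_variableCycles_literalCycle (lit : ℕ × Bool) :
    Disjoint (variableCycles φ i) (literalCycle φ lit j) := by
  rw [Finset.disjoint_left]
  intro e he
  obtain ⟨_, _, _, _, _, rfl⟩ := exists_tf_of_mem_variableCycles he
  simp [literalCycle_eq (i := lit.1) (s := lit.2)]

theorem pairwiseDisjoint_literalCycle :
    ((Finset.range φ.m).sigma φ.clause : Set (Σ _ : ℕ, ℕ × Bool)).PairwiseDisjoint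
      fun o => literalCycle φ o.2 o.1 := by
  rintro ⟨j, i, s⟩ ho ⟨j', i', s'⟩ ho' hne
  simp only [Finset.coe_sigma, Set.mem_sigma_iff, Finset.mem_coe, Finset.mem_range] at ho ho'
  have hij : ¬ (i = i' ∧ j = j') := by
    rintro ⟨rfl, rfl⟩
    exact hne (by rw [sign_unique ho.1 ho.2 ho'.2])
  simp only [Function.onFun, Finset.disjoint_left, literalCycle_eq, Finset.mem_insert,
    Finset.mem_singleton]
  rintro e (rfl | rfl | rfl | rfl | rfl | rfl) <;> simp <;> grind

theorem hasCircuit_literalCycle (hj : j < φ.m) (h : (i, s) ∈ φ.clause j) :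
    HasCircuit (tf s i (6 * posOf φ i j - 3)) (literalCycle φ (i, s) j).val := by
  have hpos : 0 < posOf φ i j := posOf_pos (mem_occ hj h)
  have hne : 6 * posOf φ i j - 2 ≠ 6 * posOf φ i j - 3 := by omega
  refine .of_list (L := [_, _, _, _, _, _]) (.cons _ (v := c1 j) (.cons _ (v := a i j)
    (.cons _ (v := c2 j) (.cons _ (v := tf s i (6 * posOf φ i j - 2)) (.cons _ (v := b i j)
    (.cons _ (.nil _))))))) (fun e he => ?_) ?_
  · simpa [literalCycle_eq] using he
  · rw [literalCycle_eq]
    iterate 5 rw [Finset.card_insert_of_notMem]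
    all_goals simp [hne]

theorem hasCircuit_Yedges :
    HasCircuit (tf true i (6 * μ φ i)) (Yedges φ i).val := by
  refine .of_list (L := [_, _, _, _]) (.cons _ (v := f ((i + 1) % φ.n) 1)
    (.cons _ (v := f i (6 * μ φ i)) (.cons _ (v := t ((i + 1) % φ.n) 1)
    (.cons _ (.nil _))))) (fun e he => ?_) ?_
  · simpa [Yedges, tf] using he
  · rw [Yedges]
    iterate 3 rw [Finset.card_insert_of_notMem]
    all_goals simp

theorem le_card_Xedges : 12 * μ φ i ≤ (Xedges φ i).card := by
  have hinj (v : ℕ → V3) (hv : v.Injective) : Function.Injective fun l => s(v l, v (l + 1)) := by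
    intro l l'
    simp only [Sym2.eq_iff, hv.eq_iff]
    omega
  rw [Xedges, Finset.card_union_of_disjoint, Finset.card_union_of_disjoint,
    Finset.card_image_of_injective _ (hinj (t i) fun _ _ h => (t.inj h).2),
    Finset.card_image_of_injective _ (hinj (f i) fun _ _ h => (f.inj h).2)]
  · by_cases h : μ φ i = 0
    · simp [h]
    · rw [Finset.card_pair (by simp), Nat.card_Ico]
      omega
  all_goals
    simp only [Finset.disjoint_left, Finset.mem_union, Finset.mem_image]
    grind

theorem hasCircuit_Xedges (hi : 1 ≤ μ φ i) : HasCircuit (tf true i 1) (Xedges φ i).val := by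
  obtain ⟨k, hk⟩ : ∃ k, 6 * μ φ i = k + 1 := ⟨6 * μ φ i - 1, by omega⟩
  let side (s : Bool) := (List.range k).flatMap fun l => [s(tf s i (l + 1), tf s i (l + 1 + 1))]
  have hside (s : Bool) : IsWalk (tf s i 1) (side s) (tf s i (k + 1)) :=
    IsWalk.flatMap_range (f := fun l => tf s i (l + 1)) fun l _ => .single _ _
  have hmem (s : Bool) (l : ℕ) (hl : 1 ≤ l) (hlk : l < k + 1) :
      s(tf s i l, tf s i (l + 1)) ∈ side s :=
    List.mem_flatMap.2 ⟨l - 1, List.mem_range.2 (by omega), by simp [Nat.sub_add_cancel hl]⟩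
  have hcard := le_card_Xedges (φ := φ) (i := i)
  refine .of_list (((hside true).append (.single _ _)).append
    ((hside false).reverse.append (.single _ _))) (fun e he => ?_) ?_
  · rw [mem_Xedges, hk] at he
    rcases he with ⟨s | s, l, hl, hlk, rfl⟩ | rfl | rfl <;> simp [*]
  · simp only [side, List.length_append, List.length_reverse, List.length_flatMap,
      List.length_cons, List.length_nil, List.map_const', List.sum_replicate, List.length_range,
      smul_eq_mul]
    omega

theorem hasCircuit_variableCycles (hi : 1 ≤ μ φ i) (s : Bool) :
    HasCircuit (tf s i 1) (variableCycles φ i).val := by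
  have hX : HasCircuit (tf s i 1) (Xedges φ i).val :=
    (hasCircuit_Xedges hi).rotate (mem_Xedges.2 (.inr (.inr rfl))) (by cases s <;> simp)
  exact hX.union hasCircuit_Yedges disjoint_Xedges_Yedges
    (mem_Xedges.2 (.inr (.inl rfl))) (Sym2.mem_mk_left _ _)

theorem hasCircuit_biUnion_variableCycles (hμ : ∀ i < φ.n, 1 ≤ μ φ i) (s : Bool) {k : ℕ}
    (hk : k ≤ φ.n) : HasCircuit (tf s 0 1) ((Finset.range k).biUnion (variableCycles φ)).val := by
  induction k with
  | zero => exact .zero _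
  | succ k ih =>
    rw [Finset.range_add_one, Finset.biUnion_insert, Finset.union_comm]
    rcases k.eq_zero_or_pos with rfl | hk0
    · simpa using hasCircuit_variableCycles (hμ 0 hk) s
    have hbridge : s(tf true (k - 1) (6 * μ φ (k - 1)), tf true k 1) ∈ Yedges φ (k - 1) :=
      mem_Yedges.2 ⟨true, true, by rw [Nat.sub_add_cancel hk0, Nat.mod_eq_of_lt hk]⟩
    refine (ih (by omega)).union (hasCircuit_variableCycles (hμ k hk) true) ?_
      (Finset.mem_biUnion.2 ⟨k - 1, Finset.mem_range.2 (by omega),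
        Finset.mem_union_right _ hbridge⟩) (Sym2.mem_mk_right _ _)
    rw [Finset.disjoint_biUnion_left]
    intro i hi
    rw [Finset.mem_range] at hi
    exact disjoint_variableCycles hi.ne

theorem hasCircuit_E0 (hμ : ∀ i < φ.n, 1 ≤ μ φ i) (s : Bool) :
    HasCircuit (tf s 0 1) (E0 φ).val := by
  rw [E0_eq]
  refine (hasCircuit_biUnion_variableCycles hμ s le_rfl).union_biUnion ?_ ?_
    pairwiseDisjoint_literalCycle
  · rintro ⟨j, i, s⟩ ho
    rw [Finset.mem_sigma, Finset.mem_range] at ho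
    have hpos : 0 < posOf φ i j := posOf_pos (mem_occ ho.1 ho.2)
    have hle := posOf_le φ i j
    refine ⟨s(tf s i (6 * posOf φ i j - 3), tf s i (6 * posOf φ i j - 3 + 1)), ?_, _,
      Sym2.mem_mk_left _ _, hasCircuit_literalCycle ho.1 ho.2⟩
    refine Finset.mem_biUnion.2 ⟨i, Finset.mem_range.2 (φ.var_lt j ho.1 _ ho.2), ?_⟩
    exact Finset.mem_union_left _ (mem_Xedges.2 (.inl ⟨s, _, by omega, by omega, rfl⟩))
  · intro o _
    rw [Finset.disjoint_biUnion_left]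
    exact fun i _ => disjoint_variableCycles_literalCycle o.2

end Eulerian

section Imbalance

open V3

variable {φ : CNF3}

/-- The indices `(i, l)` of the paths `P_i^l`, in the order in which the classes `E_i^l` have to be
traversed. -/
def levels (φ : CNF3) : List (ℕ × ℕ) :=
  (List.range φ.n).flatMap fun i => (List.range (6 * μ φ i)).map fun k => (i, k + 1)

theorem mem_levels {p : ℕ × ℕ} : p ∈ levels φ ↔ validCI φ (.pl p.1 p.2) := by
  simp only [levels, validCI, List.mem_flatMap, List.mem_range, List.mem_map, Prod.ext_iff]
  constructor
  · rintro ⟨i, hi, k, hk, rfl, hl⟩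
    exact ⟨hi, by omega, by omega⟩
  · rintro ⟨hi, hl, hl'⟩
    exact ⟨p.1, hi, p.2 - 1, by omega, rfl, by omega⟩

theorem pairwise_prec_levels :
    (levels φ).Pairwise fun p q => prec (.pl p.1 p.2) (.pl q.1 q.2) := by
  rw [levels, List.pairwise_flatMap]
  constructor
  · intro i _
    rw [List.pairwise_map]
    exact List.pairwise_lt_range.imp fun h => .inr ⟨rfl, by simpa using h⟩
  · refine List.pairwise_lt_range.imp fun h p hp q hq => ?_
    obtain ⟨_, _, rfl⟩ := List.mem_map.1 hp
    obtain ⟨_, _, rfl⟩ := List.mem_map.1 hq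
    exact .inl h

theorem nodup_levels : (levels φ).Nodup := by
  refine pairwise_prec_levels.imp ?_
  rintro p _ h rfl
  simp [prec] at h

theorem card_levels : (levels φ).toFinset.card = (levels φ).length :=
  List.toFinset_card_of_nodup nodup_levels

/-- The vertices `t_i^l`, `f_i^l`, `c_j¹` and `c_j²`; they turn out to be the imbalanced ones. -/
def terminals (φ : CNF3) : Finset V3 :=
  ((Finset.range φ.m).biUnion fun j => {c1 j, c2 j}) ∪
    (levels φ).toFinset.biUnion fun p => {tf true p.1 p.2, tf false p.1 p.2}

theorem coe_terminals : (terminals φ : Set V3) = VFT φ ∪ VC φ := by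
  ext v
  simp only [Finset.mem_coe, terminals, Finset.mem_union, Finset.mem_biUnion, List.mem_toFinset,
    mem_levels, validCI, Finset.mem_range, Finset.mem_insert, Finset.mem_singleton, Set.mem_union,
    VFT, VC, tf, Prod.exists, Set.mem_ofPred_eq]
  grind

theorem sum_terminals (g : V3 → ℕ) :
    ∑ v ∈ terminals φ, g v = ∑ j ∈ Finset.range φ.m, (g (c1 j) + g (c2 j)) +
      ∑ p ∈ (levels φ).toFinset, (g (tf true p.1 p.2) + g (tf false p.1 p.2)) := by
  rw [terminals, Finset.sum_union, Finset.sum_biUnion, Finset.sum_biUnion]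
  · simp
  all_goals
    simp only [Set.PairwiseDisjoint, Set.Pairwise, Function.onFun, Finset.disjoint_left,
      Finset.mem_biUnion, Finset.mem_insert, Finset.mem_singleton]
    grind [tf_inj, tf_ne]

theorem sum_Eall (g : Sym2 V3 → ℕ) :
    ∑ e ∈ Eall φ, g e = ∑ e ∈ E0 φ, g e +
      (∑ j ∈ Finset.range φ.m, (g s(c1 j, cs) + g s(cs, c2 j)) +
        ∑ p ∈ (levels φ).toFinset,
          (g s(tf true p.1 p.2, z p.1 p.2) + g s(z p.1 p.2, tf false p.1 p.2))) := by
  have hEall : Eall φ = E0 φ ∪ (Estar φ ∪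
      (levels φ).toFinset.biUnion fun p => Epl φ p.1 p.2) := by
    ext e
    simp only [mem_Eall, Finset.mem_union, Finset.mem_biUnion, List.mem_toFinset, mem_levels,
      Prod.exists]
  have hE0 : Disjoint (E0 φ) (Estar φ ∪ (levels φ).toFinset.biUnion fun p => Epl φ p.1 p.2) := by
    simp only [Finset.disjoint_left, Finset.mem_union, Finset.mem_biUnion, mem_Estar, mem_Epl]
    rintro e he (⟨j, _, rfl | rfl⟩ | ⟨p, _, s, rfl⟩)
    · exact (notMem_of_mem_E0 he).1 (Sym2.mem_mk_right _ _)
    · exact (notMem_of_mem_E0 he).1 (Sym2.mem_mk_left _ _)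
    · exact (notMem_of_mem_E0 he).2 _ _ (Sym2.mem_mk_right _ _)
  have hstar : Disjoint (Estar φ) ((levels φ).toFinset.biUnion fun p => Epl φ p.1 p.2) := by
    simp only [Finset.disjoint_left, Finset.mem_biUnion, mem_Estar, mem_Epl]
    rintro e ⟨j, _, rfl | rfl⟩ ⟨p, _, s, h⟩ <;> simp at h
  rw [hEall, Finset.sum_union hE0, Finset.sum_union hstar, Estar, Finset.sum_biUnion,
    Finset.sum_biUnion]
  · simp [Epl, tf]
  · rintro p _ q _ hne
    simp only [Function.onFun, Finset.disjoint_left, mem_Epl]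
    rintro e ⟨s, rfl⟩ ⟨s', h⟩
    simp only [Sym2.eq_iff, tf_inj, tf_ne, false_and, or_false] at h
    exact hne (Prod.ext h.1.2.1 h.1.2.2)
  · rintro j _ j' _ hne
    simp only [Function.onFun, Finset.disjoint_left]
    rintro e he he'
    simp only [Finset.mem_insert, Finset.mem_singleton] at he he'
    grind

theorem card_terminals : (terminals φ).card = 2 * φ.m + 2 * (levels φ).length := by
  rw [Finset.card_eq_sum_ones, sum_terminals]
  simp [card_levels, mul_comm]

theorem card_Eall : (Eall φ).card = (E0 φ).card + (2 * φ.m + 2 * (levels φ).length) := by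
  rw [Finset.card_eq_sum_ones, sum_Eall]
  simp [card_levels, mul_comm]

theorem odd_mDeg_Eall_iff (hμ : ∀ i < φ.n, 1 ≤ μ φ i) (v : V3) :
    Odd (mDeg (Eall φ).val v) ↔ v ∈ terminals φ := by
  have hmid : mDeg (Eall φ).val v = mDeg (E0 φ).val v +
      2 * (∑ _j ∈ Finset.range φ.m, (if v = cs then 1 else 0) +
        ∑ p ∈ (levels φ).toFinset, (if v = z p.1 p.2 then 1 else 0)) +
      ∑ x ∈ terminals φ, (if v = x then 1 else 0) := by
    simp only [mDeg_finset_val, sum_Eall, sum_terminals, mDeg_mk, Finset.sum_add_distrib]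
    ring
  have heven := (hasCircuit_E0 hμ true).even_mDeg v
  rw [hmid, Finset.sum_ite_eq, Nat.odd_add', Nat.even_add]
  split_ifs with h <;> simp [h, heven]

theorem imb_eq (hμ : ∀ i < φ.n, 1 ≤ μ φ i) : imb φ = (terminals φ).card := by
  simp only [imb, Nat.not_even_iff_odd, odd_mDeg_Eall_iff hμ, Nat.card_eq_fintype_card,
    Fintype.card_coe]

end Imbalance

section SatisfiableToTour

open V3

/-- The side on which the tour built from the assignment `σ` enters the path `P_i^l`; it leaves that
path on the side `entrySide σ i (l + 1)`, which for odd `l` is the literal of `x_i` that `σ` makes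
true. -/
def entrySide (σ : ℕ → Bool) (i l : ℕ) : Bool := if Even l then σ i else !σ i

/-- The vertex at which the tour enters the path of a level `(i, l)`. -/
def entry (σ : ℕ → Bool) (p : ℕ × ℕ) : V3 := tf (entrySide σ p.1 p.2) p.1 p.2

/-- The vertex at which the tour leaves the path of a level `(i, l)`. -/
def exit (σ : ℕ → Bool) (p : ℕ × ℕ) : V3 := tf (entrySide σ p.1 (p.2 + 1)) p.1 p.2

/-- The cyclic successor of a level. -/
def nextLevel (φ : CNF3) (p : ℕ × ℕ) : ℕ × ℕ :=
  if p.2 < 6 * μ φ p.1 then (p.1, p.2 + 1) else ((p.1 + 1) % φ.n, 1)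

/-- The level after which the tour visits the vertices of clause `j`, where `lit j` is the literal
chosen to satisfy that clause. -/
def contact (φ : CNF3) (lit : ℕ → ℕ × Bool) (j : ℕ) : ℕ × ℕ :=
  ((lit j).1, 6 * posOf φ (lit j).1 j - 3)

/-- The part of the tour between the paths of `p` and of the next level: a detour through `c*` if
`p` is the contact of a clause, and a single edge otherwise. -/
def link (φ : CNF3) (σ : ℕ → Bool) (lit : ℕ → ℕ × Bool) (p : ℕ × ℕ) : List (Sym2 V3) :=
  match (List.range φ.m).find? fun j => contact φ lit j = p with
  | some j => [s(exit σ p, c1 j), s(c1 j, cs), s(cs, c2 j), s(c2 j, entry σ (nextLevel φ p))]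
  | none => [s(exit σ p, entry σ (nextLevel φ p))]

/-- The part of the tour from the entry of the level `p` to the entry of the next level. -/
def segment (φ : CNF3) (σ : ℕ → Bool) (lit : ℕ → ℕ × Bool) (p : ℕ × ℕ) : List (Sym2 V3) :=
  s(entry σ p, z p.1 p.2) :: s(z p.1 p.2, exit σ p) :: link φ σ lit p

variable {φ : CNF3} {σ : ℕ → Bool} {lit : ℕ → ℕ × Bool} {p q : ℕ × ℕ} {e : Sym2 V3} {i j l : ℕ}

theorem entrySide_succ : entrySide σ i (l + 1) = !entrySide σ i l := by
  by_cases h : Even l <;> simp [entrySide, Nat.even_add_one, h]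

theorem contact_mem_levels (hj : j < φ.m) (hlit : lit j ∈ φ.clause j) :
    contact φ lit j ∈ levels φ := by
  have hpos : 0 < posOf φ (lit j).1 j := posOf_pos (mem_occ hj hlit)
  have hle := posOf_le φ (lit j).1 j
  exact mem_levels.2 ⟨φ.var_lt j hj _ hlit, by simp only [contact]; omega,
    by simp only [contact]; omega⟩

theorem contact_injOn (hlit : ∀ j < φ.m, lit j ∈ φ.clause j) :
    Set.InjOn (contact φ lit) (Set.Iio φ.m) := by
  intro j hj j' hj' h
  have hocc := mem_occ hj (hlit j hj)
  have hocc' := mem_occ hj' (hlit j' hj')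
  have hpos : 0 < posOf φ (lit j).1 j := posOf_pos hocc
  have hpos' : 0 < posOf φ (lit j').1 j' := posOf_pos hocc'
  obtain ⟨hi, hl⟩ := Prod.ext_iff.1 h
  simp only [contact] at hi hl
  rw [← hi] at hocc' hpos' hl
  exact posOf_injOn hocc hocc' (by omega)

theorem link_cases (φ : CNF3) (σ : ℕ → Bool) (lit : ℕ → ℕ × Bool) (p : ℕ × ℕ) :
    (∃ j < φ.m, contact φ lit j = p ∧ link φ σ lit p =
      [s(exit σ p, c1 j), s(c1 j, cs), s(cs, c2 j), s(c2 j, entry σ (nextLevel φ p))]) ∨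
    (∀ j < φ.m, contact φ lit j ≠ p) ∧
      link φ σ lit p = [s(exit σ p, entry σ (nextLevel φ p))] := by
  cases h : (List.range φ.m).find? fun j => contact φ lit j = p with
  | some j =>
    exact .inl ⟨j, List.mem_range.1 (List.mem_of_find?_eq_some h),
      by simpa using List.find?_some h, by rw [link, h]⟩
  | none => exact .inr ⟨by simpa using h, by rw [link, h]⟩

theorem isWalk_segment : IsWalk (entry σ p) (segment φ σ lit p) (entry σ (nextLevel φ p)) := by
  have hlink : IsWalk (exit σ p) (link φ σ lit p) (entry σ (nextLevel φ p)) := by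
    rcases link_cases φ σ lit p with ⟨j, _, _, h⟩ | ⟨_, h⟩ <;> rw [h]
    · exact .cons _ (.cons _ (.cons _ (.single _ _)))
    · exact .single _ _
  exact .cons _ (.cons _ hlink)

theorem isWalk_flatMap_segment (hμ : ∀ i < φ.n, 1 ≤ μ φ i) :
    IsWalk (entry σ (0, 1)) ((levels φ).flatMap (segment φ σ lit)) (entry σ (0, 1)) := by
  have hvar : ∀ i < φ.n, IsWalk (entry σ (i, 1))
      ((List.range (6 * μ φ i)).flatMap fun k => segment φ σ lit (i, k + 1))
      (entry σ ((i + 1) % φ.n, 1)) := by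
    intro i hi
    have hpos := hμ i hi
    have h := IsWalk.flatMap_range (f := fun k => entry σ (nextLevel φ (i, k)))
      (g := fun k => segment φ σ lit (i, k + 1)) (n := 6 * μ φ i) fun k hk => by
        simpa [nextLevel, hk] using isWalk_segment (φ := φ) (σ := σ) (lit := lit) (p := (i, k + 1))
    simpa [nextLevel, Nat.one_le_iff_ne_zero.1 hpos, Nat.pos_iff_ne_zero.2] using h
  have h := IsWalk.flatMap_range (f := fun i => entry σ (i % φ.n, 1)) (n := φ.n) fun i hi => by
    rw [Nat.mod_eq_of_lt hi]
    exact hvar i hi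
  simpa [levels, List.flatMap_assoc, List.flatMap_map] using h

theorem mem_link_contact (hlit : ∀ j < φ.m, lit j ∈ φ.clause j) (hj : j < φ.m) :
    s(c1 j, cs) ∈ link φ σ lit (contact φ lit j) ∧
      s(cs, c2 j) ∈ link φ σ lit (contact φ lit j) := by
  rcases link_cases φ σ lit (contact φ lit j) with ⟨j', hj', hc, h⟩ | ⟨h, _⟩
  · obtain rfl := contact_injOn hlit hj' hj hc
    simp [h]
  · exact absurd rfl (h j hj)

theorem exit_contact (hlit : lit j ∈ φ.clause j) (hj : j < φ.m) (hσ : σ (lit j).1 = (lit j).2) :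
    exit σ (contact φ lit j) = tf (lit j).2 (lit j).1 (6 * posOf φ (lit j).1 j - 3) := by
  have hpos : 0 < posOf φ (lit j).1 j := posOf_pos (mem_occ hj hlit)
  have heven : Even (6 * posOf φ (lit j).1 j - 3 + 1) :=
    ⟨3 * posOf φ (lit j).1 j - 1, by omega⟩
  simp only [exit, contact, entrySide, heven, if_true, hσ]

theorem entry_nextLevel_contact (hlit : lit j ∈ φ.clause j) (hj : j < φ.m)
    (hσ : σ (lit j).1 = (lit j).2) :
    entry σ (nextLevel φ (contact φ lit j)) =
      tf (lit j).2 (lit j).1 (6 * posOf φ (lit j).1 j - 2) := by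
  have hpos : 0 < posOf φ (lit j).1 j := posOf_pos (mem_occ hj hlit)
  have hle := posOf_le φ (lit j).1 j
  have hlt : 6 * posOf φ (lit j).1 j - 3 < 6 * μ φ (lit j).1 := by omega
  have hnext : 6 * posOf φ (lit j).1 j - 3 + 1 = 6 * posOf φ (lit j).1 j - 2 := by omega
  have heven : Even (6 * posOf φ (lit j).1 j - 2) := ⟨3 * posOf φ (lit j).1 j - 1, by omega⟩
  simp only [entry, nextLevel, contact, hlt, if_true, hnext, entrySide, heven, hσ]

theorem mem_E0_or_mem_Estar_of_mem_link (hlit : ∀ j < φ.m, lit j ∈ φ.clause j)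
    (hσ : ∀ j < φ.m, σ (lit j).1 = (lit j).2) (hp : p ∈ levels φ) (he : e ∈ link φ σ lit p) :
    e ∈ E0 φ ∨ e ∈ Estar φ := by
  rcases link_cases φ σ lit p with ⟨j, hj, rfl, h⟩ | ⟨_, h⟩ <;> rw [h] at he
  · have hcycle := literalCycle_eq (φ := φ) (i := (lit j).1) (s := (lit j).2) (j := j)
    rw [exit_contact (hlit j hj) hj (hσ j hj), entry_nextLevel_contact (hlit j hj) hj (hσ j hj)]
      at he
    simp only [List.mem_cons, List.not_mem_nil, or_false] at he
    rw [mem_E0, mem_Estar]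
    rcases he with rfl | rfl | rfl | rfl
    · exact .inl (.inr ⟨j, hj, lit j, hlit j hj, by simp [hcycle]⟩)
    · exact .inr ⟨j, hj, .inl rfl⟩
    · exact .inr ⟨j, hj, .inr rfl⟩
    · exact .inl (.inr ⟨j, hj, lit j, hlit j hj, by simp [hcycle]⟩)
  · obtain ⟨i, l⟩ := p
    obtain ⟨hi, hl, hle⟩ := mem_levels.1 hp
    obtain rfl := List.mem_singleton.1 he
    refine .inl (mem_E0.2 (.inl ⟨i, hi, Finset.mem_union.2 ?_⟩))
    rw [mem_Xedges, mem_Yedges]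
    rcases Nat.lt_or_eq_of_le hle with hlt | (hlast : l = 6 * μ φ i)
    · exact .inl (.inl ⟨entrySide σ i (l + 1), l, hl, hlt, by
        simp only [entry, exit, nextLevel, hlt, if_true]⟩)
    · exact .inr ⟨entrySide σ i (l + 1), entrySide σ ((i + 1) % φ.n) 1, by
        simp only [entry, exit, nextLevel, hlast, lt_irrefl, if_false]⟩

theorem mem_segment_of_mem_Epl (he : e ∈ Epl φ p.1 p.2) : e ∈ segment φ σ lit p := by
  obtain ⟨s, rfl⟩ := mem_Epl.1 he
  cases s <;> cases h : entrySide σ p.1 p.2 <;> simp [segment, entry, exit, entrySide_succ, h]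

theorem eq_of_mem_segment (he : e ∈ Epl φ p.1 p.2) (heq : e ∈ segment φ σ lit q) : p = q := by
  obtain ⟨s, rfl⟩ := mem_Epl.1 he
  simp only [segment, List.mem_cons] at heq
  rcases heq with heq | heq | heq
  · have : s = entrySide σ q.1 q.2 ∧ p.1 = q.1 ∧ p.2 = q.2 := by simpa [entry] using heq
    exact Prod.ext this.2.1 this.2.2
  · have : s = entrySide σ q.1 (q.2 + 1) ∧ p.1 = q.1 ∧ p.2 = q.2 := by
      simpa [exit] using heq
    exact Prod.ext this.2.1 this.2.2
  · rcases link_cases φ σ lit q with ⟨j, _, _, h⟩ | ⟨_, h⟩ <;> rw [h] at heq <;>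
      simp [entry, exit] at heq

theorem mem_levels_segment_iff (hlit : ∀ j < φ.m, lit j ∈ φ.clause j)
    (hσ : ∀ j < φ.m, σ (lit j).1 = (lit j).2) :
    e ∈ E0 φ ∨ e ∈ (levels φ).flatMap (segment φ σ lit) ↔ e ∈ Eall φ := by
  rw [mem_Eall, List.mem_flatMap]
  constructor
  · rintro (he | ⟨p, hp, he⟩)
    · exact .inl he
    have hpath {v : V3} (s : Bool) (hv : v = tf s p.1 p.2) : s(v, z p.1 p.2) ∈ Epl φ p.1 p.2 :=
      mem_Epl.2 ⟨s, by rw [hv]⟩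
    simp only [segment, List.mem_cons] at he
    rcases he with rfl | rfl | he
    · exact .inr (.inr ⟨p.1, p.2, mem_levels.1 hp, hpath _ rfl⟩)
    · exact .inr (.inr ⟨p.1, p.2, mem_levels.1 hp, Sym2.eq_swap ▸ hpath _ rfl⟩)
    · exact (mem_E0_or_mem_Estar_of_mem_link hlit hσ hp he).imp_right .inl
  · rintro (he | he | ⟨i, l, hv, he⟩)
    · exact .inl he
    · obtain ⟨j, hj, he⟩ := mem_Estar.1 he
      refine .inr ⟨_, contact_mem_levels hj (hlit j hj),
        List.mem_cons_of_mem _ (List.mem_cons_of_mem _ ?_)⟩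
      rcases he with rfl | rfl
      · exact (mem_link_contact hlit hj).1
      · exact (mem_link_contact hlit hj).2
    · exact .inr ⟨(i, l), mem_levels.2 hv, mem_segment_of_mem_Epl he⟩

theorem length_flatMap_segment_le :
    ((levels φ).flatMap (segment φ σ lit)).length ≤ 3 * (levels φ).length + 3 * φ.m := by
  let contacts := (Finset.range φ.m).image (contact φ lit)
  have hseg (p : ℕ × ℕ) :
      (segment φ σ lit p).length ≤ 3 + 3 * if p ∈ contacts then 1 else 0 := by
    rcases link_cases φ σ lit p with ⟨j, hj, rfl, h⟩ | ⟨_, h⟩ <;> rw [segment, h]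
    · rw [if_pos (Finset.mem_image_of_mem _ (Finset.mem_range.2 hj))]
      simp
    · simp
  have hcontacts : ∑ p ∈ (levels φ).toFinset, (if p ∈ contacts then 1 else 0) ≤ φ.m := by
    rw [Finset.sum_ite_mem, Finset.sum_const, smul_eq_mul, mul_one]
    exact (Finset.card_le_card Finset.inter_subset_right).trans
      (Finset.card_image_le.trans_eq (Finset.card_range _))
  rw [List.length_flatMap, ← List.sum_toFinset _ nodup_levels]
  calc ∑ p ∈ (levels φ).toFinset, (segment φ σ lit p).length
      ≤ ∑ p ∈ (levels φ).toFinset, (3 + 3 * if p ∈ contacts then 1 else 0) :=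
        Finset.sum_le_sum fun p _ => hseg p
    _ = 3 * (levels φ).length + 3 * ∑ p ∈ (levels φ).toFinset, if p ∈ contacts then 1 else 0 := by
        rw [Finset.sum_add_distrib, ← Finset.mul_sum, Finset.sum_const, card_levels, smul_eq_mul,
          mul_comm]
    _ ≤ 3 * (levels φ).length + 3 * φ.m := by gcongr

theorem isPrefix_of_append_eq_append_cons {α : Type*} {e : α} {A B C D : List α}
    (h : C ++ D = A ++ e :: B) (he : e ∉ C) : C <+: A := by
  have hA : A ++ [e] <+: C ++ D := ⟨B, by simpa using h.symm⟩
  rcases List.prefix_or_prefix_of_prefix hA (List.prefix_append C D) with hC | hC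
  · exact absurd (hC.subset (by simp)) he
  · exact (List.prefix_concat_iff.1 hC).resolve_left (by rintro rfl; simp at he)

theorem precRespecting_append_segments {L : List (Sym2 V3)} (hL : ∀ e, e ∈ L ↔ e ∈ E0 φ) :
    PrecRespecting φ (L ++ (levels φ).flatMap (segment φ σ lit)) := by
  rw [precRespecting_iff]
  rintro A e B hsplit (_ | ⟨i, l⟩ | _) hQ heQ P hP hPQ e' he'
  · cases P <;> exact hPQ.elim
  · replace heQ : e ∈ Epl φ i l := heQ
    obtain ⟨X, Y, hXY⟩ := List.append_of_mem (mem_levels.2 hQ : (i, l) ∈ levels φ)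
    have hnodup := nodup_levels (φ := φ)
    have hsorted := pairwise_prec_levels (φ := φ)
    rw [hXY] at hnodup hsorted
    have hfirst : e ∉ L ++ X.flatMap (segment φ σ lit) := by
      rw [List.mem_append, hL, List.mem_flatMap]
      rintro (he | ⟨q, hq, he⟩)
      · obtain ⟨s, rfl⟩ := mem_Epl.1 heQ
        exact (notMem_of_mem_E0 he).2 i l (Sym2.mem_mk_right _ _)
      · obtain rfl := eq_of_mem_segment (p := (i, l)) heQ he
        grind
    rw [hXY, List.flatMap_append, ← List.append_assoc] at hsplit
    have hprefix := isPrefix_of_append_eq_append_cons hsplit hfirst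
    refine hprefix.subset ?_
    rw [List.mem_append, hL, List.mem_flatMap]
    rcases P with _ | ⟨i', l'⟩ | _
    · exact .inl he'
    · refine .inr ⟨(i', l'), ?_, mem_segment_of_mem_Epl he'⟩
      have hmem : (i', l') ∈ X ++ (i, l) :: Y := hXY ▸ mem_levels.2 hP
      simp only [prec, List.pairwise_append, List.pairwise_cons] at hPQ hsorted
      simp only [List.mem_append, List.mem_cons, Prod.mk.injEq] at hmem
      grind
    · exact hPQ.elim
  · cases P <;> exact hPQ.elim

theorem exists_isTightWalk_of_satisfiable (hμ : ∀ i < φ.n, 1 ≤ μ φ i) (h : Satisfiable φ) :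
    ∃ u L, IsTightWalk φ u L := by
  obtain ⟨σ, h⟩ := h
  choose! lit hlit hσ using h
  obtain ⟨L, hL, hE0⟩ := hasCircuit_E0 hμ (entrySide σ 0 1)
  have hmem (e : Sym2 V3) : e ∈ L ↔ e ∈ E0 φ := by
    rw [← Finset.mem_val, ← hE0, Multiset.mem_coe]
  refine ⟨_, L ++ (levels φ).flatMap (segment φ σ lit), hL.append (isWalk_flatMap_segment hμ),
    fun e => ?_, precRespecting_append_segments hmem, ?_⟩
  · rw [List.mem_append, hmem, mem_levels_segment_iff hlit hσ]
  · have hlength : L.length = (E0 φ).card := congrArg Multiset.card hE0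
    have hle := length_flatMap_segment_le (φ := φ) (σ := σ) (lit := lit)
    rw [imb_eq hμ, card_terminals, card_Eall, List.length_append]
    omega

end SatisfiableToTour

section Adjacency

open V3

variable {φ : CNF3} {s s' : Bool} {i j j' l : ℕ} {w : V3} {e : Sym2 V3}

theorem mk_mem_Epl (φ : CNF3) (s : Bool) (i l : ℕ) : s(tf s i l, z i l) ∈ Epl φ i l :=
  mem_Epl.2 ⟨s, rfl⟩

theorem exists_tf_of_mem_VFT (h : w ∈ VFT φ) : ∃ s i l, w = tf s i l := by
  obtain ⟨i, _, l, _, _, rfl | rfl⟩ := h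
  · exact ⟨true, i, l, rfl⟩
  · exact ⟨false, i, l, rfl⟩

theorem exists_tf_of_z_mem_Eall (h : s(z i l, w) ∈ Eall φ) :
    validCI φ (.pl i l) ∧ ∃ s, w = tf s i l := by
  rcases mem_Eall.1 h with h | h | ⟨i', l', hv, h⟩
  · exact absurd (Sym2.mem_mk_left _ _) ((notMem_of_mem_E0 h).2 i l)
  · simp [mem_Estar] at h
  · obtain ⟨s, h⟩ := mem_Epl.1 h
    simp only [Sym2.eq_iff, ne_tf, z.injEq, false_and, false_or] at h
    obtain ⟨⟨rfl, rfl⟩, hw⟩ := h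
    exact ⟨hv, s, hw⟩

theorem c1_mem_literalCycle : s(c1 j, w) ∈ literalCycle φ (i, s) j' ↔
    j = j' ∧ (w = tf s i (6 * posOf φ i j - 3) ∨ w = a i j) := by
  simp only [literalCycle_eq, Finset.mem_insert, Finset.mem_singleton, Sym2.eq_iff, ne_tf,
    c1.injEq, reduceCtorEq]
  grind

theorem c2_mem_literalCycle : s(c2 j, w) ∈ literalCycle φ (i, s) j' ↔
    j = j' ∧ (w = tf s i (6 * posOf φ i j - 2) ∨ w = a i j) := by
  simp only [literalCycle_eq, Finset.mem_insert, Finset.mem_singleton, Sym2.eq_iff, ne_tf,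
    c2.injEq, reduceCtorEq]
  grind

theorem mem_literalCycle_of_mem_Eall {v : V3} (h : s(v, w) ∈ Eall φ)
    (hv : v = c1 j ∨ v = c2 j) (hw : w ≠ cs) :
    ∃ i s, (i, s) ∈ φ.clause j ∧ s(v, w) ∈ literalCycle φ (i, s) j := by
  rcases mem_Eall.1 h with h | h | ⟨i', l', _, h⟩
  · rcases mem_E0.1 h with ⟨i, _, h⟩ | ⟨j', hj', ⟨i, s⟩, hc, h⟩
    · obtain ⟨_, _, _, _, _, h⟩ := exists_tf_of_mem_variableCycles h
      rcases hv with rfl | rfl <;> simp at h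
    · obtain rfl : j = j' := by
        rcases hv with rfl | rfl
        · exact (c1_mem_literalCycle.1 h).1
        · exact (c2_mem_literalCycle.1 h).1
      exact ⟨i, s, hc, h⟩
  · simp only [mem_Estar, Sym2.eq_iff] at h
    grind
  · rcases hv with rfl | rfl <;> simp [mem_Epl] at h

theorem exists_literal_of_c1_mem_Eall (h : s(c1 j, w) ∈ Eall φ) (hw : w ∈ VFT φ ∪ VC φ) :
    ∃ i s, (i, s) ∈ φ.clause j ∧ w = tf s i (6 * posOf φ i j - 3) := by
  have hcs : w ≠ cs := by rintro rfl; simp [VFT, VC] at hw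
  obtain ⟨i, s, hc, h⟩ := mem_literalCycle_of_mem_Eall h (.inl rfl) hcs
  have ha : w ≠ a i j := by rintro rfl; simp [VFT, VC] at hw
  exact ⟨i, s, hc, (c1_mem_literalCycle.1 h).2.resolve_right ha⟩

theorem exists_clause_of_tf_mem_Eall (h : s(tf s i l, w) ∈ Eall φ) (hw : w ∈ VC φ) :
    ∃ j < φ.m, (i, s) ∈ φ.clause j ∧ 0 < posOf φ i j ∧
      (l = 6 * posOf φ i j - 3 ∨ l = 6 * posOf φ i j - 2) := by
  obtain ⟨j, hj, hw⟩ := hw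
  rw [Sym2.eq_swap] at h
  obtain ⟨i', s', hc, h⟩ := mem_literalCycle_of_mem_Eall h hw (by simp)
  have hpos : 0 < posOf φ i' j := posOf_pos (mem_occ hj hc)
  rcases hw with rfl | rfl
  · obtain ⟨rfl, rfl, hl⟩ : s = s' ∧ i = i' ∧ l = 6 * posOf φ i' j - 3 := by
      simpa using (c1_mem_literalCycle.1 h).2
    exact ⟨j, hj, hc, hpos, .inl hl⟩
  · obtain ⟨rfl, rfl, hl⟩ : s = s' ∧ i = i' ∧ l = 6 * posOf φ i' j - 2 := by
      simpa using (c2_mem_literalCycle.1 h).2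
    exact ⟨j, hj, hc, hpos, .inr hl⟩

theorem side_eq_of_succ_mem_Eall (hl : 1 ≤ l) (h : s(tf s i l, tf s' i (l + 1)) ∈ Eall φ) :
    s = s' := by
  rcases mem_Eall.1 h with h | h | ⟨i', l', _, h⟩
  · rcases mem_E0.1 h with ⟨i', _, h⟩ | ⟨j', _, ⟨i, s⟩, _, h⟩
    · rw [variableCycles, Finset.mem_union, mem_Xedges, mem_Yedges] at h
      simp only [Sym2.eq_iff, tf_inj] at h
      grind
    · simp [literalCycle_eq] at h
  · simp [mem_Estar] at h
  · simp [mem_Epl] at h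

theorem validCI_of_mem_Epl (h : e ∈ Eall φ) (he : e ∈ Epl φ i l) : validCI φ (.pl i l) := by
  obtain ⟨s, rfl⟩ := mem_Epl.1 he
  rw [Sym2.eq_swap] at h
  exact (exists_tf_of_z_mem_Eall h).1

end Adjacency

section MatchedWalks

open V3

/-- A tight walk together with the multiset `M` of its traversals beyond the first of each edge,
which perfectly matches the imbalanced vertices. -/
structure IsMatchedWalk (φ : CNF3) (u : V3) (L : List (Sym2 V3)) (M : Multiset (Sym2 V3)) : Prop
    extends IsTightWalk φ u L where
  coe_eq : (L : Multiset (Sym2 V3)) = (Eall φ).val + M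
  matching : IsPerfectMatchingOn M (VFT φ ∪ VC φ)

variable {φ : CNF3} {u w : V3} {L A B C : List (Sym2 V3)} {M : Multiset (Sym2 V3)}
  {e : Sym2 V3} {P : CI} {s a b : Bool} {i j l : ℕ}

theorem IsTightWalk.exists_isMatchedWalk (hμ : ∀ i < φ.n, 1 ≤ μ φ i) (h : IsTightWalk φ u L) :
    ∃ M, IsMatchedWalk φ u L M := by
  have hle : (Eall φ).val ≤ L :=
    (Multiset.le_iff_subset (Eall φ).nodup).2 fun e he => (h.mem_iff e).2 he
  obtain ⟨M, hM⟩ := Multiset.le_iff_exists_add.1 hle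
  refine ⟨M, h, hM, coe_terminals ▸ isPerfectMatchingOn_of_card_le (fun v hv => ?_) ?_⟩
  · have heven : Even (mDeg L v) := HasCircuit.even_mDeg ⟨L, h.isWalk, rfl⟩ v
    have hodd := (odd_mDeg_Eall_iff hμ v).2 hv
    rw [hM, mDeg_add, Nat.even_add', iff_true_left hodd] at heven
    exact heven.pos
  · have hlen := h.length_le
    have hcard := congrArg Multiset.card hM
    rw [Multiset.coe_card, Multiset.card_add, Finset.card_val] at hcard
    rw [imb_eq hμ] at hlen
    omega

namespace IsMatchedWalk

theorem mem_Eall_of_mem (T : IsMatchedWalk φ u L M) (h : e ∈ M) : e ∈ Eall φ := by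
  rw [← T.mem_iff, ← Multiset.mem_coe, T.coe_eq]
  exact Multiset.mem_add.2 (.inr h)

theorem count_eq (T : IsMatchedWalk φ u L M) (h : e ∈ Eall φ) : L.count e = 1 + M.count e := by
  rw [← Multiset.coe_count, T.coe_eq, Multiset.count_add,
    Multiset.count_eq_one_of_mem (Eall φ).nodup h]

theorem count_le_one (T : IsMatchedWalk φ u L M) (h : e ∈ Epl φ i l) : L.count e ≤ 1 := by
  by_cases hE : e ∈ Eall φ
  · rw [T.count_eq hE, Multiset.count_eq_zero_of_notMem]
    obtain ⟨s, rfl⟩ := mem_Epl.1 h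
    rw [Sym2.eq_swap]
    intro hM
    simpa [VFT, VC] using T.matching.mem_of_mk_mem hM
  · rw [List.count_eq_zero_of_not_mem (mt (T.mem_iff e).1 hE)]
    exact zero_le_one

theorem notMem_of_eq_append_cons (T : IsMatchedWalk φ u L M) (h : e ∈ Epl φ i l)
    (hL : L = A ++ e :: B) : e ∉ A ∧ e ∉ B := by
  have hc := T.count_le_one h
  rw [hL, List.count_append, List.count_cons_self] at hc
  exact ⟨List.count_eq_zero.1 (by omega), List.count_eq_zero.1 (by omega)⟩

theorem start_ne_z (T : IsMatchedWalk φ u L M) (hi : i < φ.n) (k l : ℕ) : u ≠ z k l := by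
  rintro rfl
  have hX : s(tf false i 1, tf true i 1) ∈ E0 φ := mem_E0.2
    (.inl ⟨i, hi, Finset.mem_union_left _ (mem_Xedges.2 (.inr (.inr rfl)))⟩)
  obtain ⟨e, L, rfl⟩ := List.exists_cons_of_ne_nil
    (List.ne_nil_of_mem ((T.mem_iff _).2 (mem_Eall.2 (.inl hX))))
  obtain ⟨x, rfl, _⟩ := IsWalk.cons_iff.1 T.isWalk
  obtain ⟨hv, s, rfl⟩ := exists_tf_of_z_mem_Eall ((T.mem_iff _).1 (List.mem_cons_self ..))
  have := precRespecting_iff.1 T.prec [] _ L rfl (.pl k l) hv (Sym2.eq_swap ▸ mk_mem_Epl φ s k l)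
    .e0 trivial trivial _ hX
  simp at this

end IsMatchedWalk

/-- The traversal of the path `P_i^l` from its side `s` to the other one. -/
def crossing (s : Bool) (i l : ℕ) : List (Sym2 V3) :=
  [s(tf s i l, z i l), s(z i l, tf (!s) i l)]

theorem mem_crossing : e ∈ crossing s i l ↔ e ∈ Epl φ i l := by
  simp only [crossing, List.mem_cons, List.not_mem_nil, or_false, mem_Epl, Bool.exists_bool]
  cases s <;> grind

theorem IsWalk.exists_crossing (h : IsWalk u L w) (hu : u ≠ z i l) (hw : w ≠ z i l)
    (hL : ∀ e ∈ L, e ∈ Eall φ) (hc : ∀ e ∈ Epl φ i l, L.count e ≤ 1)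
    (hm : s(tf s i l, z i l) ∈ L) :
    ∃ a A B, L = A ++ crossing a i l ++ B ∧ IsWalk u A (tf a i l) ∧ IsWalk (tf (!a) i l) B w := by
  obtain ⟨A, B, rfl, hA, hB⟩ := h.exists_append_of_mem hm (Sym2.mem_mk_right _ _)
  rcases A.eq_nil_or_concat' with rfl | ⟨A, e, rfl⟩
  · exact absurd (IsWalk.nil_iff.1 hA) hu
  rcases B with _ | ⟨e', B⟩
  · exact absurd (IsWalk.nil_iff.1 hB).symm hw
  obtain ⟨x, rfl, hA'⟩ := IsWalk.concat_iff.1 hA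
  obtain ⟨y, rfl, hB'⟩ := IsWalk.cons_iff.1 hB
  obtain ⟨-, a, rfl⟩ := exists_tf_of_z_mem_Eall (hL s(z i l, x) (by simp [Sym2.eq_swap]))
  obtain ⟨-, b, rfl⟩ := exists_tf_of_z_mem_Eall (hL s(z i l, y) (by simp))
  have hne : b ≠ a := by
    rintro rfl
    have := hc _ (mk_mem_Epl φ b i l)
    simp only [Sym2.eq_swap (a := z i l), List.append_assoc, List.cons_append, List.nil_append,
      List.count_append, List.count_cons_self] at this
    omega
  obtain rfl : b = !a := Bool.eq_not_of_ne hne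
  exact ⟨a, A, B, by simp [crossing], hA', hB'⟩

theorem PrecRespecting.mem_of_crossing (h : PrecRespecting φ L)
    (hL : L = A ++ crossing s i l ++ B) (hv : validCI φ (.pl i l)) (hP : validCI φ P)
    (hPl : prec P (.pl i l)) (he : e ∈ classEdges φ P) : e ∈ A :=
  precRespecting_iff.1 h A _ (s(z i l, tf (!s) i l) :: B) (by simp [hL, crossing]) (.pl i l) hv
    (mk_mem_Epl φ s i l) P hP hPl e he

theorem IsMatchedWalk.exists_consecutive (T : IsMatchedWalk φ u L M)
    (hv : validCI φ (.pl i l)) (hv' : validCI φ (.pl i (l + 1))) :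
    ∃ a b A B C, L = A ++ crossing a i l ++ C ++ crossing b i (l + 1) ++ B ∧
      IsWalk (tf (!a) i l) C (tf b i (l + 1)) := by
  have hmem {k m : ℕ} (h : validCI φ (.pl k m)) : s(tf true k m, z k m) ∈ L :=
    (T.mem_iff _).2 (mem_Eall.2 (.inr (.inr ⟨k, m, h, mk_mem_Epl φ true k m⟩)))
  obtain ⟨b, P, B, hL, hP, -⟩ := T.isWalk.exists_crossing (T.start_ne_z hv.1 i (l + 1))
    (T.start_ne_z hv.1 i (l + 1)) (fun e => (T.mem_iff e).1) (fun e => T.count_le_one) (hmem hv')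
  have hPL : P.Sublist L := by
    rw [hL, List.append_assoc]
    exact List.sublist_append_left _ _
  obtain ⟨a, A, C, rfl, -, hC⟩ := hP.exists_crossing (T.start_ne_z hv.1 i l) (by simp)
    (fun e he => (T.mem_iff e).1 (hPL.subset he))
    (fun e he => (hPL.count_le e).trans (T.count_le_one he))
    (T.prec.mem_of_crossing hL hv' hv (.inr ⟨rfl, Nat.lt_succ_self l⟩) (mk_mem_Epl φ true i l))
  exact ⟨a, b, A, B, C, hL, hC⟩

/-- The side from which `L` first enters the path `P_i^l`: `true` for `t_i^l`, `false` for
`f_i^l`. -/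
def firstSide (L : List (Sym2 V3)) (i l : ℕ) : Bool :=
  L.idxOf s(tf true i l, z i l) < L.idxOf s(tf false i l, z i l)

/-- The list `C` traverses only edges at `c*` and edges of `M`, the latter at most once. -/
def IsLink (φ : CNF3) (M : Multiset (Sym2 V3)) (C : List (Sym2 V3)) : Prop :=
  ∀ e ∈ C, e ∈ Estar φ ∨ e ∈ M ∧ C.count e ≤ 1

theorem IsLink.reverse (h : IsLink φ M C) : IsLink φ M C.reverse := by
  simpa [IsLink] using h

namespace IsMatchedWalk

theorem notMem_Epl_of_between (T : IsMatchedWalk φ u L M)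
    (hL : L = A ++ crossing a i l ++ C ++ crossing b i (l + 1) ++ B)
    (hv : validCI φ (.pl i l)) (hv' : validCI φ (.pl i (l + 1))) (he : e ∈ C) (k m : ℕ) :
    e ∉ Epl φ k m := by
  intro hpl
  have hkm := validCI_of_mem_Epl ((T.mem_iff e).1 (by simp [hL, he])) hpl
  obtain ⟨C₁, C₂, rfl⟩ := List.append_of_mem he
  have hL' : L = (A ++ crossing a i l ++ C₁) ++ e :: (C₂ ++ crossing b i (l + 1) ++ B) := by
    simp [hL]
  obtain ⟨hbefore, hafter⟩ := T.notMem_of_eq_append_cons hpl hL'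
  simp only [List.mem_append, not_or] at hbefore hafter
  have hcases : prec (.pl k m) (.pl i l) ∨ (k = i ∧ m = l) ∨ (k = i ∧ m = l + 1) ∨
      prec (.pl i (l + 1)) (.pl k m) := by
    simp only [prec]
    omega
  rcases hcases with h | ⟨rfl, rfl⟩ | ⟨rfl, rfl⟩ | h
  · exact hbefore.1.1 (T.prec.mem_of_crossing (s := a)
      (B := C₁ ++ e :: C₂ ++ crossing b i (l + 1) ++ B) (by simp [hL]) hv hkm h hpl)
  · exact hbefore.1.2 (mem_crossing.2 hpl)
  · exact hafter.1.2 (mem_crossing.2 hpl)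
  · have hb : s(tf b i (l + 1), z i (l + 1)) ∈ Epl φ i (l + 1) := mk_mem_Epl φ b i (l + 1)
    have := precRespecting_iff.1 T.prec _ _ _ hL' (.pl k m) hkm hpl _ hv' h _ hb
    refine (T.notMem_of_eq_append_cons hb (A := A ++ crossing a i l ++ (C₁ ++ e :: C₂))
      (B := s(z i (l + 1), tf (!b) i (l + 1)) :: B) ?_).1 ?_
    · simpa [crossing] using hL
    · simp only [List.mem_append] at this ⊢
      tauto

theorem isLink_of_between (T : IsMatchedWalk φ u L M)
    (hL : L = A ++ crossing a i l ++ C ++ crossing b i (l + 1) ++ B)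
    (hv : validCI φ (.pl i l)) (hv' : validCI φ (.pl i (l + 1))) : IsLink φ M C := by
  intro e he
  have hE : e ∈ Eall φ := (T.mem_iff e).1 (by simp [hL, he])
  rcases mem_Eall.1 hE with h | h | ⟨k, m, _, h⟩
  · have hA : e ∈ A := T.prec.mem_of_crossing (s := a) (B := C ++ crossing b i (l + 1) ++ B)
      (by simp [hL]) hv (P := .e0) trivial trivial h
    have hAC : A.count e + C.count e ≤ L.count e := by
      simp only [hL, List.count_append]
      omega
    have hApos := List.count_pos_iff.2 hA
    have hCpos := List.count_pos_iff.2 he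
    have hM := Multiset.nodup_iff_count_le_one.1 T.matching.1 e
    rw [T.count_eq hE] at hAC
    exact .inr ⟨Multiset.count_pos.1 (by omega), by omega⟩
  · exact .inl h
  · exact absurd h (T.notMem_Epl_of_between hL hv hv' he k m)

theorem partner_of_isLink (T : IsMatchedWalk φ u L M) (hC : IsLink φ M C)
    (h : IsWalk (tf s i l) C w) (hw : tf s i l ≠ w) :
    s(tf s i l, w) ∈ M ∨ ∃ x ∈ VC φ, s(tf s i l, x) ∈ M := by
  have hM {s i l x} (h : s(tf s i l, x) ∈ C) : s(tf s i l, x) ∈ M ∧ C.count s(tf s i l, x) ≤ 1 :=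
    (hC _ h).resolve_left (by simp [mem_Estar])
  rcases C with _ | ⟨e, C⟩
  · exact absurd (IsWalk.nil_iff.1 h) hw
  obtain ⟨x, rfl, hx⟩ := IsWalk.cons_iff.1 h
  obtain ⟨hxM, hcount⟩ := hM (List.mem_cons_self ..)
  have hxM' : s(x, tf s i l) ∈ M := Sym2.eq_swap ▸ hxM
  rcases T.matching.mem_of_mk_mem hxM' with hxt | hxc
  · left
    obtain ⟨s', i', l', rfl⟩ := exists_tf_of_mem_VFT hxt
    rcases C with _ | ⟨e', C⟩
    · rwa [← IsWalk.nil_iff.1 hx]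
    obtain ⟨y, rfl, -⟩ := IsWalk.cons_iff.1 hx
    have hyM : s(tf s' i' l', y) ∈ M := (hM (by simp)).1
    obtain rfl := T.matching.partner_unique hxM' hyM
    simp [Sym2.eq_swap (a := tf s' i' l')] at hcount
  · exact .inr ⟨x, hxc, hxM⟩

theorem firstSide_eq (T : IsMatchedWalk φ u L M) (hL : L = A ++ crossing s i l ++ B) :
    firstSide L i l = s := by
  have hnotMem : s(tf (!s) i l, z i l) ∉ A ++ [s(tf s i l, z i l)] :=
    (T.notMem_of_eq_append_cons (B := B) (mk_mem_Epl φ (!s) i l)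
      (by simp [hL, crossing, Sym2.eq_swap (a := z i l)])).1
  have hL' : L = (A ++ [s(tf s i l, z i l)]) ++ s(z i l, tf (!s) i l) :: B := by
    simp [hL, crossing]
  have hlt : L.idxOf s(tf s i l, z i l) < L.idxOf s(tf (!s) i l, z i l) := by
    rw [hL', List.idxOf_append_of_mem (by simp), List.idxOf_append_of_notMem hnotMem]
    exact Nat.lt_add_right _ (List.idxOf_lt_length_of_mem (by simp))
  cases s
  · simpa [firstSide] using hlt.le
  · simpa [firstSide] using hlt

theorem exists_link (T : IsMatchedWalk φ u L M)
    (hv : validCI φ (.pl i l)) (hv' : validCI φ (.pl i (l + 1))) :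
    ∃ C, IsLink φ M C ∧
      IsWalk (tf (!firstSide L i l) i l) C (tf (firstSide L i (l + 1)) i (l + 1)) := by
  obtain ⟨a, b, A, B, C, hL, hC⟩ := T.exists_consecutive hv hv'
  refine ⟨C, T.isLink_of_between hL hv hv', ?_⟩
  have hL' : L = A ++ crossing a i l ++ (C ++ crossing b i (l + 1) ++ B) := by simp [hL]
  rwa [T.firstSide_eq hL, T.firstSide_eq hL']

theorem partner_exit (T : IsMatchedWalk φ u L M)
    (hv : validCI φ (.pl i l)) (hv' : validCI φ (.pl i (l + 1))) :
    s(tf (!firstSide L i l) i l, tf (firstSide L i (l + 1)) i (l + 1)) ∈ M ∨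
      ∃ x ∈ VC φ, s(tf (!firstSide L i l) i l, x) ∈ M := by
  obtain ⟨C, hlink, hC⟩ := T.exists_link hv hv'
  exact T.partner_of_isLink hlink hC (by simp)

theorem partner_entry (T : IsMatchedWalk φ u L M)
    (hv : validCI φ (.pl i l)) (hv' : validCI φ (.pl i (l + 1))) :
    s(tf (!firstSide L i l) i l, tf (firstSide L i (l + 1)) i (l + 1)) ∈ M ∨
      ∃ x ∈ VC φ, s(tf (firstSide L i (l + 1)) i (l + 1), x) ∈ M := by
  obtain ⟨C, hlink, hC⟩ := T.exists_link hv hv'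
  rw [Sym2.eq_swap]
  exact T.partner_of_isLink hlink.reverse hC.reverse (by simp)

theorem firstSide_succ (T : IsMatchedWalk φ u L M)
    (hv : validCI φ (.pl i l)) (hv' : validCI φ (.pl i (l + 1))) :
    firstSide L i (l + 1) = !firstSide L i l := by
  have hdirect (h : s(tf (!firstSide L i l) i l, tf (firstSide L i (l + 1)) i (l + 1)) ∈ M) :=
    (side_eq_of_succ_mem_Eall hv.2.1 (T.mem_Eall_of_mem h)).symm
  rcases T.partner_exit hv hv' with h | ⟨x, hx, hxM⟩
  · exact hdirect h
  rcases T.partner_entry hv hv' with h | ⟨y, hy, hyM⟩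
  · exact hdirect h
  obtain ⟨j, hj, hc, hpos, hl⟩ := exists_clause_of_tf_mem_Eall (T.mem_Eall_of_mem hxM) hx
  obtain ⟨j', hj', hc', hpos', hl'⟩ := exists_clause_of_tf_mem_Eall (T.mem_Eall_of_mem hyM) hy
  have hocc : j ∈ occ φ i := mem_occ hj hc
  have hocc' : j' ∈ occ φ i := mem_occ hj' hc'
  obtain rfl : j = j' := posOf_injOn hocc hocc' (by omega)
  exact sign_unique hj hc' hc

theorem firstSide_odd (T : IsMatchedWalk φ u L M) (hi : i < φ.n) {k : ℕ}
    (hk : 2 * k + 1 ≤ 6 * μ φ i) : firstSide L i (2 * k + 1) = firstSide L i 1 := by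
  induction k with
  | zero => rfl
  | succ k ih =>
    rw [← ih (by omega), ← Bool.not_not (firstSide L i (2 * k + 1)),
      ← T.firstSide_succ ⟨hi, by omega, by omega⟩ ⟨hi, by omega, by omega⟩]
    exact T.firstSide_succ ⟨hi, by omega, by omega⟩ ⟨hi, by omega, by omega⟩

theorem firstSide_ne_of_c1_partner (T : IsMatchedWalk φ u L M) (hj : j < φ.m)
    (hc : (i, s) ∈ φ.clause j) (hM : s(tf s i (6 * posOf φ i j - 3), c1 j) ∈ M) :
    firstSide L i (6 * posOf φ i j - 3) ≠ s := by
  intro hs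
  have hpos : 0 < posOf φ i j := posOf_pos (mem_occ hj hc)
  have hle := posOf_le φ i j
  have hi : i < φ.n := φ.var_lt j hj _ hc
  obtain ⟨l, hl⟩ : ∃ l, 6 * posOf φ i j - 3 = l + 1 := ⟨6 * posOf φ i j - 4, by omega⟩
  rw [hl] at hs hM
  rcases T.partner_exit (l := l) ⟨hi, by omega, by omega⟩ ⟨hi, by omega, by omega⟩ with
    h | ⟨x, hx, hxM⟩
  · rw [hs, Sym2.eq_swap] at h
    simpa using T.matching.partner_unique h hM
  · obtain ⟨j', _, _, _, hl'⟩ := exists_clause_of_tf_mem_Eall (T.mem_Eall_of_mem hxM) hx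
    omega

theorem satisfiable (T : IsMatchedWalk φ u L M) : Satisfiable φ := by
  refine ⟨fun i => !firstSide L i 1, fun j hj => ?_⟩
  have hcj : c1 j ∈ VFT φ ∪ VC φ := .inr ⟨j, hj, .inl rfl⟩
  obtain ⟨w, hw⟩ := T.matching.exists_partner hcj
  have hw' : s(w, c1 j) ∈ M := Sym2.eq_swap ▸ hw
  obtain ⟨i, s, hc, rfl⟩ := exists_literal_of_c1_mem_Eall (T.mem_Eall_of_mem hw)
    (T.matching.mem_of_mk_mem hw')
  refine ⟨(i, s), hc, ?_⟩
  have hpos : 0 < posOf φ i j := posOf_pos (mem_occ hj hc)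
  have hle := posOf_le φ i j
  have hodd : firstSide L i (6 * posOf φ i j - 3) = firstSide L i 1 := by
    have hi : i < φ.n := φ.var_lt j hj _ hc
    have hk : 6 * posOf φ i j - 3 = 2 * (3 * posOf φ i j - 2) + 1 := by omega
    rw [hk, T.firstSide_odd hi (by omega)]
  have hne := T.firstSide_ne_of_c1_partner hj hc hw'
  rw [hodd] at hne
  exact (Bool.eq_not_of_ne hne.symm).symm

end IsMatchedWalk

end MatchedWalks

/-- The HCPP instance `I_φ` produced by the construction from a 3-CNF formula `φ`
(in which every variable occurs in some clause) admits a tight tour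
if and only if `φ` is satisfiable. -/
theorem tight_tour_iff_satisfiable (φ : CNF3) (hμ : ∀ i < φ.n, 1 ≤ μ φ i) :
    (∃ T : List V3, IsTightTour φ T) ↔ Satisfiable φ := by
  rw [exists_isTightTour_iff]
  constructor
  · rintro ⟨u, L, h⟩
    obtain ⟨M, hM⟩ := h.exists_isMatchedWalk hμ
    exact hM.satisfiable
  · exact exists_isTightWalk_of_satisfiable hμ

end HCPPFormal
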